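/- arXiv:2106.10647 — 13 statements merged into one kernel-verified Lean document; each statement's English description precedes it below -/
import Mathlib

section
/- Let I ⊆ ℝ be a closed bounded interval and f : I → I a continuous map. Then f admits no 2-cycle if and only if every periodic point of f is a fixed point of f (i.e., for every x ∈ I and every n ≥ 1, fⁿ(x) = x implies f(x) = x). -/
theorem aux_fix {g : ℝ → ℝ} {s t : ℝ} (hst : s ≤ t) (hg : ContinuousOn g (Set.Icc s t))
    (h : (s ≤ g s ∧ g t ≤ t) ∨ (g s ≤ s ∧ t ≤ g t)) : ∃ w ∈ Set.Icc s t, g w = w := by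
  have hc : ContinuousOn (fun x => g x - x) (Set.Icc s t) := hg.sub continuousOn_id
  rcases h with ⟨h1, h2⟩ | ⟨h1, h2⟩
  · obtain ⟨w, hw, hw'⟩ := intermediate_value_Icc' hst hc
      (show (0:ℝ) ∈ Set.Icc (g t - t) (g s - s) from ⟨by linarith, by linarith⟩)
    exact ⟨w, hw, by simp only at hw'; linarith⟩
  · obtain ⟨w, hw, hw'⟩ := intermediate_value_Icc hst hc
      (show (0:ℝ) ∈ Set.Icc (g s - s) (g t - t) from ⟨by linarith, by linarith⟩)
    exact ⟨w, hw, by simp only at hw'; linarith⟩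

/-- Without 2-cycles, a point moving down is still strictly down after two steps. -/
theorem aux_two (a b : ℝ) (f : ℝ → ℝ)
    (hf : ContinuousOn f (Set.Icc a b))
    (hmaps : Set.MapsTo f (Set.Icc a b) (Set.Icc a b))
    (h2 : ∀ x ∈ Set.Icc a b, f (f x) = x → f x = x)
    (y : ℝ) (hy : y ∈ Set.Icc a b) (hlt : f y < y) : f (f y) < y := by
  by_contra hcon
  push Not at hcon
  have hff : ContinuousOn (fun x => f (f x)) (Set.Icc a b) := hf.comp hf hmaps
  have hbb : b ∈ Set.Icc a b := ⟨hy.1.trans hy.2, le_rfl⟩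
  have hsub : Set.Icc y b ⊆ Set.Icc a b := Set.Icc_subset_Icc_left hy.1
  obtain ⟨w, hw, hw'⟩ := aux_fix hy.2 (hff.mono hsub) (Or.inl ⟨hcon, (hmaps (hmaps hbb)).2⟩)
  have hwf := h2 w (hsub hw) hw'
  have hcl : IsClosed (Set.Icc y b ∩ (fun x => f x - x) ⁻¹' {0}) :=
    ((hf.mono hsub).sub continuousOn_id).preimage_isClosed_of_isClosed isClosed_Icc
      isClosed_singleton
  have hcomp : IsCompact (Set.Icc y b ∩ (fun x => f x - x) ⁻¹' {0}) :=
    isCompact_Icc.of_isClosed_subset hcl Set.inter_subset_left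
  obtain ⟨q, ⟨hq, hq0⟩, hqmin⟩ := hcomp.exists_isLeast ⟨w, hw, by simp [hwf]⟩
  have hqf : f q = q := by
    have : f q - q = 0 := hq0
    linarith
  have hno : ∀ s, y ≤ s → s < q → f s ≠ s := by
    intro s h1 h3 h4
    have := hqmin (⟨⟨h1, h3.le.trans hq.2⟩, by simp [h4]⟩ :
      s ∈ Set.Icc y b ∩ (fun x => f x - x) ⁻¹' {0})
    linarith
  have hyq : y < q := by
    rcases hq.1.eq_or_lt with h | h
    · rw [← h] at hqf; linarith
    · exact h
  have hdown : ∀ s, y ≤ s → s < q → f s < s := by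
    intro s h1 h3
    by_contra h4
    push Not at h4
    obtain ⟨v, hv, hv'⟩ := aux_fix h1
      (hf.mono (Set.Icc_subset_Icc hy.1 (h3.le.trans hq.2))) (Or.inr ⟨hlt.le, h4⟩)
    exact hno v hv.1 (hv.2.trans_lt h3) hv'
  obtain ⟨z, hz, hz'⟩ := intermediate_value_Icc hyq.le
    (hf.mono (Set.Icc_subset_Icc hy.1 hq.2))
    (show (y + q) / 2 ∈ Set.Icc (f y) (f q) from ⟨by linarith, by linarith⟩)
  have hzq : z < q := by
    rcases hz.2.eq_or_lt with h | h
    · rw [h, hqf] at hz'; linarith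
    · exact h
  have h5 := hdown z hz.1 hzq
  have h6 := hdown (f z) (by linarith) (by linarith)
  obtain ⟨v, hv, hv'⟩ := aux_fix hz.1
    (hff.mono (Set.Icc_subset_Icc hy.1 (hzq.le.trans hq.2)))
    (Or.inl ⟨hcon, (h6.trans h5).le⟩)
  have hvq := hv.2.trans_lt hzq
  exact hno v hv.1 hvq (h2 v ⟨hy.1.trans hv.1, hvq.le.trans hq.2⟩ hv')

/-- Without 2-cycles, an upward moving point never returns. -/
theorem aux_up (a b : ℝ) (f : ℝ → ℝ)
    (hf : ContinuousOn f (Set.Icc a b))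
    (hmaps : Set.MapsTo f (Set.Icc a b) (Set.Icc a b))
    (h2 : ∀ x ∈ Set.Icc a b, f (f x) = x → f x = x)
    (c : ℝ) (hc : c ∈ Set.Icc a b) (hlt : c < f c) (n : ℕ) : c < f^[n + 1] c := by
  have key : ∀ l ∈ Set.Icc a b, ∀ x, l < x → x ≤ f l → l < f x := by
    intro l hl x h1 h3
    by_contra h4
    push Not at h4
    have hxb : x ≤ b := h3.trans (hmaps hl).2
    obtain ⟨y, hy, hy'⟩ := intermediate_value_Icc' h1.le
      (hf.mono (Set.Icc_subset_Icc hl.1 hxb))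
      (show l ∈ Set.Icc (f x) (f l) from ⟨h4, by linarith⟩)
    have hly : l < y := by
      rcases hy.1.eq_or_lt with h | h
      · rw [← h] at hy'; linarith
      · exact h
    have := aux_two a b f hf hmaps h2 y ⟨hl.1.trans hy.1, hy.2.trans hxb⟩ (by linarith)
    rw [hy'] at this
    linarith [hy.2]
  have inv : ∀ m : ℕ, ∃ l ∈ Set.Icc a b, c ≤ l ∧ l < f^[m + 1] c ∧ f^[m + 1] c ≤ f l := by
    intro m
    induction m with
    | zero => exact ⟨c, hc, le_rfl, by simpa using hlt, by simp⟩
    | succ m ih =>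
      obtain ⟨l, hl, h1, h3, h4⟩ := ih
      rw [Function.iterate_succ_apply' f (m + 1)]
      generalize f^[m + 1] c = x at *
      rcases lt_or_ge x (f x) with h | h
      · exact ⟨x, ⟨hl.1.trans h3.le, h4.trans (hmaps hl).2⟩, h1.trans h3.le, h, le_rfl⟩
      · exact ⟨l, hl, h1, key l hl x h3 h4, h.trans h4⟩
  obtain ⟨l, _, h1, h3, _⟩ := inv n
  exact h1.trans_lt h3

/-- An interval map with no 2-cycle is exactly one whose periodic points are all fixed. -/
theorem stmt_0 (a b : ℝ) (hab : a ≤ b) (f : ℝ → ℝ)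
    (hf : ContinuousOn f (Set.Icc a b))
    (hmaps : Set.MapsTo f (Set.Icc a b) (Set.Icc a b)) :
    (¬ ∃ x ∈ Set.Icc a b, ∃ y ∈ Set.Icc a b, x ≠ y ∧ f x = y ∧ f y = x) ↔
    (∀ x ∈ Set.Icc a b, ∀ n : ℕ, 1 ≤ n → f^[n] x = x → f x = x) := by
  constructor
  · intro hno x hx n hn hper
    have h2 : ∀ x ∈ Set.Icc a b, f (f x) = x → f x = x := by
      intro x hx h
      by_contra hne
      exact hno ⟨x, hx, f x, hmaps hx, fun e => hne e.symm, rfl, h⟩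
    obtain ⟨k, rfl⟩ : ∃ k, n = k + 1 := ⟨n - 1, by omega⟩
    rcases lt_trichotomy x (f x) with h | h | h
    · have := aux_up a b f hf hmaps h2 x hx h k
      linarith
    · exact h.symm
    · have hneg : Set.MapsTo (fun t : ℝ => -t) (Set.Icc (-b) (-a)) (Set.Icc a b) :=
        fun t ht => ⟨by linarith [ht.2], by linarith [ht.1]⟩
      have hit : ∀ m : ℕ, (fun t => -f (-t))^[m] (-x) = -(f^[m] x) := by
        intro m
        induction m with
        | zero => simp
        | succ m ih => rw [Function.iterate_succ_apply', ih, Function.iterate_succ_apply']; simp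
      have := aux_up (-b) (-a) (fun t => -f (-t))
        ((hf.comp continuous_neg.continuousOn hneg).neg)
        (fun t ht => ⟨by linarith [(hmaps (hneg ht)).2], by linarith [(hmaps (hneg ht)).1]⟩)
        (fun t ht h => by
          have := h2 (-t) (hneg ht) (by simp only [neg_neg] at h; linarith)
          linarith)
        (-x) ⟨by linarith [hx.2], by linarith [hx.1]⟩ (by simp only [neg_neg]; linarith) k
      rw [hit, hper] at this
      linarith
  · rintro h ⟨x, hx, y, hy, hne, h1, h3⟩
    have := h x hx 2 (by norm_num) (by simp [h1, h3])
    exact hne (this.symm.trans h1)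
end

section
/- Let I ⊆ ℝ be a closed bounded interval and f : I → I a continuous map. Then f admits no 2-cycle if and only if for all x, y ∈ I, if x lies between y and f(y) (that is, min(y, f(y)) ≤ x ≤ max(y, f(y))) and y lies between x and f(x) (that is, min(x, f(x)) ≤ y ≤ max(x, f(x))), then x = y. -/
lemma two_cycle_aux (a b : ℝ) (f : ℝ → ℝ)
    (hf : ContinuousOn f (Set.Icc a b))
    (hmaps : Set.MapsTo f (Set.Icc a b) (Set.Icc a b)) (x : ℝ) (hx : x ∈ Set.Icc a b)
    (h1 : x < f x) (h2 : f (f x) ≤ x) :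
    ∃ x ∈ Set.Icc a b, ∃ y ∈ Set.Icc a b, x ≠ y ∧ f x = y ∧ f y = x := by
  have key : ∃ t ∈ Set.Icc a x, t ≤ f (f t) ∧ ∀ s ∈ Set.Icc t x, s < f s := by
    have hfx : ContinuousOn f (Set.Icc a x) := hf.mono (Set.Icc_subset_Icc_right hx.2)
    by_cases hS : ({t ∈ Set.Icc a x | f t ≤ t}).Nonempty
    · have hc : IsClosed {t ∈ Set.Icc a x | f t ≤ t} :=
        isClosed_Icc.isClosed_le hfx continuousOn_id
      have hk : IsCompact {t ∈ Set.Icc a x | f t ≤ t} :=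
        isCompact_Icc.of_isClosed_subset hc (fun t ht => ht.1)
      obtain ⟨p, ⟨hp, hfp⟩, hmax⟩ := hk.exists_isGreatest hS
      obtain ⟨t, ht, htx⟩ := intermediate_value_Icc hp.2
        (hfx.mono (Set.Icc_subset_Icc_left hp.1)) ⟨hfp.trans hp.2, h1.le⟩
      have hpt : p < t := by
        rcases eq_or_lt_of_le ht.1 with h | h
        · subst h
          have : p = x := le_antisymm hp.2 (htx ▸ hfp)
          subst this
          linarith
        · exact h
      refine ⟨t, ⟨hp.1.trans ht.1, ht.2⟩, ?_, ?_⟩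
      · rw [htx]; linarith [ht.2]
      · intro s hs
        by_contra hcon
        have : s ≤ p := hmax ⟨⟨by linarith [hp.1, hs.1], hs.2⟩, not_lt.1 hcon⟩
        linarith [hs.1]
    · refine ⟨a, ⟨le_rfl, hx.1⟩, ?_, ?_⟩
      · exact (hmaps (hmaps ⟨le_rfl, hx.1.trans hx.2⟩)).1
      · intro s hs
        by_contra hcon
        exact hS ⟨s, hs, not_lt.1 hcon⟩
  obtain ⟨t, ht, htt, hall⟩ := key
  have hsub : Set.Icc t x ⊆ Set.Icc a b := Set.Icc_subset_Icc ht.1 hx.2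
  have hg : ContinuousOn (fun s => f (f s) - s) (Set.Icc t x) :=
    ((hf.comp hf hmaps).mono hsub).sub continuousOn_id
  obtain ⟨s, hs, hs0⟩ := intermediate_value_Icc' ht.2 hg
    (show (0 : ℝ) ∈ _ from ⟨by simpa using h2, by simpa using htt⟩)
  exact ⟨s, hsub hs, f s, hmaps (hsub hs), (hall s hs).ne, rfl, by simpa [sub_eq_zero] using hs0⟩

lemma two_cycle_aux2 (a b : ℝ) (f : ℝ → ℝ)
    (hf : ContinuousOn f (Set.Icc a b))
    (hmaps : Set.MapsTo f (Set.Icc a b) (Set.Icc a b)) (x y : ℝ) (hx : x ∈ Set.Icc a b)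
    (hy : y ∈ Set.Icc a b) (hxy : x < y)
    (h1 : min y (f y) ≤ x) (h2 : y ≤ max x (f x)) :
    ∃ x ∈ Set.Icc a b, ∃ y ∈ Set.Icc a b, x ≠ y ∧ f x = y ∧ f y = x := by
  have h3 : f y ≤ x := (min_le_iff.1 h1).resolve_left (not_le.2 hxy)
  have h4 : y ≤ f x := (le_max_iff.1 h2).resolve_left (not_le.2 hxy)
  have hsub : Set.Icc x y ⊆ Set.Icc a b := Set.Icc_subset_Icc hx.1 hy.2
  obtain ⟨t, ht, hty⟩ := intermediate_value_Icc' hxy.le (hf.mono hsub) ⟨h3.trans hxy.le, h4⟩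
  refine two_cycle_aux a b f hf hmaps t (hsub ht) ?_ ?_
  · rw [hty]
    refine lt_of_le_of_ne ht.2 ?_
    rintro rfl
    linarith
  · rw [hty]; exact h3.trans ht.1

/-- An interval map has no 2-cycle iff the "betweenness" relation is antisymmetric. -/
theorem stmt_1 (a b : ℝ) (hab : a ≤ b) (f : ℝ → ℝ)
    (hf : ContinuousOn f (Set.Icc a b))
    (hmaps : Set.MapsTo f (Set.Icc a b) (Set.Icc a b)) :
    (¬ ∃ x ∈ Set.Icc a b, ∃ y ∈ Set.Icc a b, x ≠ y ∧ f x = y ∧ f y = x) ↔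
    (∀ x ∈ Set.Icc a b, ∀ y ∈ Set.Icc a b,
      (min y (f y) ≤ x ∧ x ≤ max y (f y)) →
      (min x (f x) ≤ y ∧ y ≤ max x (f x)) → x = y) := by
  constructor
  · intro hno x hx y hy h1 h2
    rcases lt_trichotomy x y with h | h | h
    · exact (hno (two_cycle_aux2 a b f hf hmaps x y hx hy h h1.1 h2.2)).elim
    · exact h
    · exact (hno (two_cycle_aux2 a b f hf hmaps y x hy hx h h2.1 h1.2)).elim
  · rintro h ⟨x, hx, y, hy, hne, hxy, hyx⟩
    exact hne (h x hx y hy (by simp [hyx]) (by simp [hxy]))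
end

section
/- Let I ⊆ ℝ be a closed bounded interval and f : I → I a continuous map admitting no 2-cycle. Then for every x ∈ I the orbit (fⁿ(x))_{n≥0} converges to some point p ∈ I with f(p) = p. -/
open Filter Topology

/-- Intermediate value theorem for coincidences with the identity, downward version. -/
lemma aux_fix_s2 {G : ℝ → ℝ} (hG : Continuous G) {u v : ℝ} (huv : u ≤ v) (h1 : u ≤ G u)
    (h2 : G v ≤ v) : ∃ z ∈ Set.Icc u v, G z = z := by
  have := intermediate_value_Icc' huv (f := fun y => G y - y) (by fun_prop)
  obtain ⟨z, hz, h⟩ := this (show (0:ℝ) ∈ Set.Icc _ _ from ⟨by linarith, by linarith⟩)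
  exact ⟨z, hz, by simpa [sub_eq_zero] using h⟩

lemma aux_two_s2 {F : ℝ → ℝ} (hF : Continuous F) {a : ℝ} (ha : ∀ y, a ≤ F y)
    (h2 : ∀ y, F (F y) = y → F y = y) {x : ℝ} (hx : x < F x) : x < F (F x) := by
  by_contra! hc
  set S : Set ℝ := {y | y ≤ x ∧ y ≤ F (F y)} with hS
  have hcl : IsClosed S := by
    apply IsClosed.inter
    · exact isClosed_le continuous_id continuous_const
    · exact isClosed_le continuous_id (hF.comp hF)
  have hne : S.Nonempty := ⟨min a x, min_le_right _ _, (min_le_left _ _).trans (ha _)⟩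
  have hbd : BddAbove S := ⟨x, fun y hy => hy.1⟩
  have hu := hcl.csSup_mem hne hbd
  have hmax : ∀ y ∈ S, y ≤ sSup S := fun y hy => le_csSup hbd hy
  generalize sSup S = u at hu hmax
  obtain ⟨z, hz, hzz⟩ := aux_fix_s2 (hF.comp hF) hu.1 hu.2 hc
  simp only [Function.comp] at hzz
  have hzu : z = u := le_antisymm (hmax z ⟨hz.2, hzz.ge⟩) hz.1
  subst hzu
  have hfu := h2 _ hzz
  have hux : z < x := by
    rcases hz.2.lt_or_eq with h | h
    · exact h
    · rw [← h] at hx; linarith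
  have hup : ∀ y, z < y → y ≤ x → y < F y := by
    intro y hy hyx
    by_contra! hh
    have hIVT := intermediate_value_Icc hyx (f := fun y => F y - y) (by fun_prop)
    obtain ⟨t, ht, h⟩ := hIVT (show (0:ℝ) ∈ Set.Icc _ _ from ⟨by linarith, by linarith⟩)
    have h' : F t = t := by simpa [sub_eq_zero] using h
    have := hmax t ⟨ht.2, by rw [h', h']⟩
    linarith [ht.1]
  have hev : ∀ᶠ y in 𝓝[>] z, F y < x := by
    apply nhdsWithin_le_nhds
    exact hF.continuousAt.eventually_lt continuousAt_const (by rw [hfu]; exact hux)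
  obtain ⟨y, hy, hy2⟩ := (hev.and (Ioo_mem_nhdsGT hux)).exists
  have h3 := hup y hy2.1 hy2.2.le
  have h4 := hup (F y) (hy2.1.trans h3) hy.le
  have := hmax y ⟨hy2.2.le, (h3.trans h4).le⟩
  linarith [hy2.1]

lemma aux_up_s2 {F : ℝ → ℝ} (hF : Continuous F) {a : ℝ} (ha : ∀ y, a ≤ F y)
    (h2 : ∀ y, F (F y) = y → F y = y) {x : ℝ} (hx : x < F x) (n : ℕ) :
    x < F^[n + 1] x := by
  by_contra! hc
  have hex : ∃ n, F^[n + 1] x ≤ x := ⟨n, hc⟩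
  classical
  obtain ⟨k, hk, hmin⟩ : ∃ k, F^[k + 1] x ≤ x ∧ ∀ j < k, x < F^[j + 1] x :=
    ⟨Nat.find hex, Nat.find_spec hex, fun j hj => not_le.1 (Nat.find_min hex hj)⟩
  have hge : ∀ j ≤ k, x ≤ F^[j] x := by
    intro j hj
    cases j with
    | zero => simp
    | succ j => exact (hmin j hj).le
  have hxw : x ≤ F^[k] x := hge k le_rfl
  rw [Function.iterate_succ_apply'] at hk
  obtain ⟨w, hw⟩ : ∃ w, w = F^[k] x := ⟨_, rfl⟩
  rw [← hw] at hk hxw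
  have hcpt : IsCompact (Set.Icc x w ∩ {y | F y = y}) :=
    isCompact_Icc.inter_right (isClosed_eq hF continuous_id)
  obtain ⟨z, hz, hzz⟩ := aux_fix_s2 hF hxw hx.le (hk.trans hxw)
  obtain ⟨c, ⟨hcI, hcf⟩, hcmax⟩ := hcpt.exists_isGreatest ⟨z, hz, hzz⟩
  simp only [Set.mem_setOf_eq] at hcf
  have hcw : c < w := by
    rcases hcI.2.lt_or_eq with h | h
    · exact h
    · subst h
      have : c = x := by linarith [hcI.1]
      rw [← this] at hx; linarith
  have hdown : ∀ y, c < y → y ≤ w → F y < y := by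
    intro y hy hyw
    by_contra! hh
    obtain ⟨t, ht, htt⟩ := aux_fix_s2 hF hyw hh (hk.trans hxw)
    have := hcmax ⟨⟨by linarith [hcI.1, ht.1], ht.2⟩, htt⟩
    linarith [ht.1]
  obtain ⟨m, hm, hmmax⟩ := isCompact_Icc.exists_isMaxOn (Set.nonempty_Icc.2 hcI.1)
    hF.continuousOn
  have hmmax' : ∀ y ∈ Set.Icc x c, F y ≤ F m := fun y hy => hmmax hy
  have hcM : c ≤ F m := by
    have := hmmax' c ⟨hcI.1, le_rfl⟩
    linarith
  have hMw : F m < w := by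
    by_contra! hh
    obtain ⟨y, hy, hyw⟩ := intermediate_value_Icc' hm.2 hF.continuousOn
      (show w ∈ Set.Icc (F c) (F m) from ⟨by linarith, hh⟩)
    have h5 : y < F y := by rw [hyw]; linarith [hy.2]
    have h6 := aux_two_s2 hF ha h2 h5
    rw [hyw] at h6
    linarith [hy.1, hm.1]
  have hall : ∀ j ≤ k, F^[j] x ≤ F m := by
    intro j
    induction j with
    | zero => intro _; simpa using hcI.1.trans hcM
    | succ j ih =>
      intro hj
      have h7 := ih (by omega)
      have h8 := hge j (by omega)
      rw [Function.iterate_succ_apply']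
      rcases le_or_gt (F^[j] x) c with h | h
      · exact hmmax' _ ⟨h8, h⟩
      · exact (hdown _ h (h7.trans hMw.le)).le.trans h7
  have := hall k le_rfl
  linarith

lemma aux_down {F : ℝ → ℝ} (hF : Continuous F) {b : ℝ} (hb : ∀ y, F y ≤ b)
    (h2 : ∀ y, F (F y) = y → F y = y) {x : ℝ} (hx : F x < x) (n : ℕ) :
    F^[n + 1] x < x := by
  have hsc : Function.Semiconj (fun y : ℝ => -y) F (fun y => -F (-y)) := by
    intro y; simp
  have hit := (hsc.iterate_right (n + 1)) x
  have := aux_up_s2 (F := fun y => -F (-y)) (by fun_prop) (a := -b)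
    (fun y => neg_le_neg (hb _)) (fun y hy => by
      have := h2 (-y) (by simp only [neg_neg] at hy; linarith)
      linarith) (x := -x) (by simpa using hx) n
  rw [← hit] at this
  linarith

lemma aux_switch {P : ℕ → Prop} (h1 : ∃ᶠ n in atTop, P n) (h2 : ∃ᶠ n in atTop, ¬ P n) :
    ∃ᶠ n in atTop, P n ∧ ¬ P (n + 1) := by
  rw [frequently_atTop] at *
  intro N
  by_contra! hc
  obtain ⟨n, hn, hP⟩ := h1 N
  obtain ⟨m, hm, hQ⟩ := h2 n
  apply hQ
  induction m, hm using Nat.le_induction with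
  | base => exact hP
  | succ m hm ih =>
    by_cases hPm : P m
    · exact hc m (by omega) hPm
    · exact absurd (ih hPm) hPm

lemma aux_lim {F : ℝ → ℝ} (hF : Continuous F) {s : ℕ → ℝ} (hs : ∀ n, s (n + 1) = F (s n))
    {p : ℝ} (hp : Tendsto s atTop (𝓝 p)) : F p = p := by
  have h1 : Tendsto (fun n => s (n + 1)) atTop (𝓝 p) := hp.comp (tendsto_add_atTop_nat 1)
  simp only [hs] at h1
  exact tendsto_nhds_unique ((hF.tendsto p).comp hp) h1

lemma aux_main {F : ℝ → ℝ} (hF : Continuous F) {a b : ℝ} (ha : ∀ y, a ≤ F y)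
    (hb : ∀ y, F y ≤ b) (h2 : ∀ y, F (F y) = y → F y = y) (x : ℝ) (hxa : a ≤ x) (hxb : x ≤ b) :
    ∃ p, F p = p ∧ Tendsto (fun n => F^[n] x) atTop (𝓝 p) := by
  set s : ℕ → ℝ := fun n => F^[n] x with hsdef
  have hs : ∀ n, s (n + 1) = F (s n) := fun n => Function.iterate_succ_apply' F n x
  have hsa : ∀ n, a ≤ s n := by
    intro n; cases n with
    | zero => exact hxa
    | succ n => rw [hs]; exact ha _
  have hsb : ∀ n, s n ≤ b := by
    intro n; cases n with
    | zero => exact hxb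
    | succ n => rw [hs]; exact hb _
  have hadd : ∀ n m, s (n + m) = F^[m] (s n) := by
    intro n m; simp only [hsdef]; rw [add_comm, Function.iterate_add_apply]
  have hup : ∀ n m, n < m → s n < s (n + 1) → s n < s m := by
    intro n m hnm h
    obtain ⟨k, rfl⟩ := Nat.exists_eq_add_of_lt hnm
    rw [hs] at h
    rw [add_assoc, hadd]
    exact aux_up_s2 hF ha h2 h k
  have hdn : ∀ n m, n < m → s (n + 1) < s n → s m < s n := by
    intro n m hnm h
    obtain ⟨k, rfl⟩ := Nat.exists_eq_add_of_lt hnm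
    rw [hs] at h
    rw [add_assoc, hadd]
    exact aux_down hF hb h2 h k
  suffices h : ∃ p, Tendsto s atTop (𝓝 p) by
    obtain ⟨p, hp⟩ := h
    exact ⟨p, aux_lim hF hs hp, hp⟩
  by_cases hfix : ∃ n, s (n + 1) = s n
  · obtain ⟨n, hn⟩ := hfix
    refine ⟨s n, tendsto_const_nhds.congr' ?_⟩
    filter_upwards [eventually_ge_atTop n] with m hm
    induction m, hm using Nat.le_induction with
    | base => rfl
    | succ m hm ih => rw [hs, ← ih, ← hs, hn]
  push Not at hfix
  have hnot : ∀ n, ¬ s n < s (n + 1) → s (n + 1) < s n := fun n h =>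
    lt_of_le_of_ne (not_lt.1 h) (hfix n)
  by_cases hU : ∃ᶠ n in atTop, s n < s (n + 1)
  swap
  · rw [not_frequently, eventually_atTop] at hU
    obtain ⟨N, hN⟩ := hU
    have hanti : Antitone (fun n => s (n + N)) := antitone_nat_of_succ_le fun n => by
      have := hnot (n + N) (hN _ (by omega))
      rw [show n + 1 + N = n + N + 1 by ring]
      exact this.le
    exact ⟨_, (tendsto_add_atTop_iff_nat N).1
      (tendsto_atTop_ciInf hanti ⟨a, by rintro _ ⟨n, rfl⟩; exact hsa _⟩)⟩
  by_cases hD : ∃ᶠ n in atTop, ¬ s n < s (n + 1)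
  swap
  · rw [not_frequently, eventually_atTop] at hD
    obtain ⟨N, hN⟩ := hD
    have hmono : Monotone (fun n => s (n + N)) := monotone_nat_of_le_succ fun n => by
      have := not_not.1 (hN (n + N) (by omega))
      rw [show n + 1 + N = n + N + 1 by ring]
      exact this.le
    exact ⟨_, (tendsto_add_atTop_iff_nat N).1
      (tendsto_atTop_ciSup hmono ⟨b, by rintro _ ⟨n, rfl⟩; exact hsb _⟩)⟩
  obtain ⟨A, hA⟩ : ∃ A, IsLUB (s '' {n | s n < s (n + 1)}) A := by
    obtain ⟨n, hn⟩ := hU.exists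
    exact ⟨_, isLUB_csSup ⟨_, n, hn, rfl⟩ ⟨b, by rintro _ ⟨n, _, rfl⟩; exact hsb _⟩⟩
  obtain ⟨B, hB⟩ : ∃ B, IsGLB (s '' {n | ¬ s n < s (n + 1)}) B := by
    obtain ⟨n, hn⟩ := hD.exists
    exact ⟨_, isGLB_csInf ⟨_, n, hn, rfl⟩ ⟨a, by rintro _ ⟨n, _, rfl⟩; exact hsa _⟩⟩
  have hAlow : ∀ e < A, ∀ᶠ n in atTop, e < s n := by
    intro e he
    obtain ⟨_, ⟨n, hn, rfl⟩, h⟩ := (lt_isLUB_iff hA).1 he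
    filter_upwards [eventually_gt_atTop n] with m hm
    exact h.trans (hup n m hm hn)
  have hBup : ∀ e > B, ∀ᶠ n in atTop, s n < e := by
    intro e he
    obtain ⟨_, ⟨n, hn, rfl⟩, h⟩ := (isGLB_lt_iff hB).1 he
    filter_upwards [eventually_gt_atTop n] with m hm
    exact (hdn n m hm (hnot n hn)).trans h
  have hAU : ∀ n, s n < s (n + 1) → s n ≤ A := fun n hn => hA.1 ⟨n, hn, rfl⟩
  have hBD : ∀ n, ¬ s n < s (n + 1) → B ≤ s n := fun n hn => hB.1 ⟨n, hn, rfl⟩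
  have hsw1 := aux_switch hU hD
  have hsw2 := aux_switch (P := fun n => ¬ s n < s (n + 1)) hD (by simpa using hU)
  have tA : ∀ (g : ℕ → ℕ) (l : Filter ℕ), Tendsto g l atTop →
      (∀ᶠ n in l, s (g n) < s (g n + 1)) → Tendsto (fun n => s (g n)) l (𝓝 A) := by
    intro g l hg h
    refine tendsto_order.2 ⟨fun e he => hg.eventually (hAlow e he), fun e he => ?_⟩
    filter_upwards [h] with n hn using (hAU _ hn).trans_lt he
  have tB : ∀ (g : ℕ → ℕ) (l : Filter ℕ), Tendsto g l atTop →
      (∀ᶠ n in l, ¬ s (g n) < s (g n + 1)) → Tendsto (fun n => s (g n)) l (𝓝 B) := by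
    intro g l hg h
    refine tendsto_order.2 ⟨fun e he => ?_, fun e he => hg.eventually (hBup e he)⟩
    filter_upwards [h] with n hn using he.trans_le (hBD _ hn)
  have hFA : F A = B := by
    set T : Set ℕ := {n | s n < s (n + 1) ∧ ¬ s (n + 1) < s (n + 1 + 1)} with hT
    have hne : NeBot (atTop ⊓ 𝓟 T) := frequently_mem_iff_neBot.1 hsw1
    have hm : ∀ᶠ n in atTop ⊓ 𝓟 T, n ∈ T := mem_inf_of_right (mem_principal_self T)
    have h1 := tA id (atTop ⊓ 𝓟 T) inf_le_left (hm.mono fun n h => h.1)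
    have h3 := tB (fun n => n + 1) (atTop ⊓ 𝓟 T)
      ((tendsto_add_atTop_nat 1).mono_left inf_le_left) (hm.mono fun n h => h.2)
    simp only [hs] at h3
    exact tendsto_nhds_unique ((hF.tendsto A).comp h1) h3
  have hFB : F B = A := by
    set T : Set ℕ := {n | ¬ s n < s (n + 1) ∧ ¬ ¬ s (n + 1) < s (n + 1 + 1)} with hT
    have hne : NeBot (atTop ⊓ 𝓟 T) := frequently_mem_iff_neBot.1 hsw2
    have hm : ∀ᶠ n in atTop ⊓ 𝓟 T, n ∈ T := mem_inf_of_right (mem_principal_self T)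
    have h1 := tB id (atTop ⊓ 𝓟 T) inf_le_left (hm.mono fun n h => h.1)
    have h3 := tA (fun n => n + 1) (atTop ⊓ 𝓟 T)
      ((tendsto_add_atTop_nat 1).mono_left inf_le_left) (hm.mono fun n h => not_not.1 h.2)
    simp only [hs] at h3
    exact tendsto_nhds_unique ((hF.tendsto B).comp h1) h3
  have hAB : B = A := by
    have := h2 A (by rw [hFA, hFB])
    rw [← hFA, this]
  rw [hAB] at hBup
  exact ⟨A, tendsto_order.2 ⟨hAlow, hBup⟩⟩

/-- For an interval map with no 2-cycle, every orbit converges to a fixed point. -/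
theorem stmt_2 (a b : ℝ) (hab : a ≤ b) (f : ℝ → ℝ)
    (hf : ContinuousOn f (Set.Icc a b))
    (hmaps : Set.MapsTo f (Set.Icc a b) (Set.Icc a b))
    (hno2 : ¬ ∃ x ∈ Set.Icc a b, ∃ y ∈ Set.Icc a b, x ≠ y ∧ f x = y ∧ f y = x) :
    ∀ x ∈ Set.Icc a b, ∃ p ∈ Set.Icc a b, f p = p ∧
      Filter.Tendsto (fun n => f^[n] x) Filter.atTop (nhds p) := by
  intro x hx
  set F : ℝ → ℝ := Set.IccExtend hab ((Set.Icc a b).restrict f) with hFdef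
  have hF : Continuous F := (continuousOn_iff_continuous_restrict.1 hf).Icc_extend'
  have hFf : ∀ y ∈ Set.Icc a b, F y = f y := fun y hy => Set.IccExtend_of_mem hab _ hy
  have hFI : ∀ y, F y ∈ Set.Icc a b := fun y => hmaps (Set.projIcc a b hab y).2
  have hit : ∀ n, F^[n] x = f^[n] x ∧ f^[n] x ∈ Set.Icc a b := by
    intro n
    induction n with
    | zero => exact ⟨rfl, hx⟩
    | succ n ih =>
      rw [Function.iterate_succ_apply', Function.iterate_succ_apply', ih.1, hFf _ ih.2]
      exact ⟨rfl, hmaps ih.2⟩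
  obtain ⟨p, hp, hlim⟩ := aux_main hF (fun y => (hFI y).1) (fun y => (hFI y).2) (by
    intro y hy
    by_contra hne
    have hyI : y ∈ Set.Icc a b := hy ▸ hFI (F y)
    exact hno2 ⟨y, hyI, F y, hFI y, fun h => hne h.symm, (hFf y hyI).symm,
      by rw [← hFf _ (hFI y)]; exact hy⟩) x hx.1 hx.2
  have hpI : p ∈ Set.Icc a b := hp ▸ hFI p
  refine ⟨p, hpI, by rw [← hFf p hpI]; exact hp, ?_⟩
  exact hlim.congr fun n => (hit n).1
end

section
/- Let I ⊆ ℝ be a closed bounded interval and f : I → I a continuous map admitting no 2-cycle, and let x ∈ I. Then every term of the orbit (fⁿ(x))_{n≥0} is a wall; that is, for all m and all n > m: if f^{m+1}(x) > f^{m}(x) then fⁿ(x) > f^{m}(x); if f^{m+1}(x) < f^{m}(x) then fⁿ(x) < f^{m}(x); and if f^{m+1}(x) = f^{m}(x) then fⁿ(x) = f^{m}(x). -/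
/-- No point moving up returns below or at itself in two steps. -/
theorem two_step (a b : ℝ) (f : ℝ → ℝ)
    (hf : ContinuousOn f (Set.Icc a b))
    (hmaps : Set.MapsTo f (Set.Icc a b) (Set.Icc a b))
    (hno2 : ¬ ∃ x ∈ Set.Icc a b, ∃ y ∈ Set.Icc a b, x ≠ y ∧ f x = y ∧ f y = x)
    (x : ℝ) (hx : x ∈ Set.Icc a b) (h1 : x < f x) : x < f (f x) := by
  by_contra hlt
  rw [not_lt] at hlt
  have hff : ContinuousOn (fun t => f (f t)) (Set.Icc a b) := hf.comp hf hmaps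
  -- a point `y` to the left with no fixed points on `[y,x]` and `y ≤ f (f y)` is impossible
  have key : ∀ y, a ≤ y → y ≤ x → (∀ z ∈ Set.Icc y x, f z ≠ z) → y ≤ f (f y) → False := by
    intro y hay hyx hnf hy
    have hsub : Set.Icc y x ⊆ Set.Icc a b := Set.Icc_subset_Icc hay hx.2
    have hc : ContinuousOn (fun t => f (f t) - t) (Set.Icc y x) :=
      (hff.mono hsub).sub continuousOn_id
    obtain ⟨w, hw, hw0⟩ := intermediate_value_Icc' hyx hc
      (show (0:ℝ) ∈ Set.Icc _ _ from ⟨by simpa using hlt, by simpa using hy⟩)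
    exact hno2 ⟨w, hsub hw, f w, hmaps (hsub hw), (hnf w hw).symm, rfl, by
      have : f (f w) - w = 0 := hw0
      linarith⟩
  by_cases hfix : ∃ z ∈ Set.Icc a x, f z = z
  · have hsub : Set.Icc a x ⊆ Set.Icc a b := Set.Icc_subset_Icc le_rfl hx.2
    have hcl : IsClosed (Set.Icc a x ∩ (fun t => f t - t) ⁻¹' {0}) :=
      ((hf.mono hsub).sub continuousOn_id).preimage_isClosed_of_isClosed isClosed_Icc
        isClosed_singleton
    have hcomp : IsCompact (Set.Icc a x ∩ (fun t => f t - t) ⁻¹' {0}) :=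
      isCompact_Icc.of_isClosed_subset hcl Set.inter_subset_left
    obtain ⟨z, hz, hzf⟩ := hfix
    obtain ⟨c, ⟨hc, hcf⟩, hmax⟩ := hcomp.exists_isGreatest ⟨z, hz, by simp [hzf]⟩
    have hcf : f c = c := by
      have : f c - c = 0 := hcf
      linarith
    obtain ⟨y, hy, hyx⟩ := intermediate_value_Icc hc.2
      (hf.mono (Set.Icc_subset_Icc hc.1 hx.2)) (show x ∈ Set.Icc _ _ from ⟨by rw [hcf]; exact hc.2, h1.le⟩)
    have hcy : c < y := by
      rcases hy.1.lt_or_eq with h | h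
      · exact h
      · subst h
        rw [← hyx, hcf] at h1
        rw [hcf] at h1
        exact absurd h1 (lt_irrefl _)
    refine key y (hc.1.trans hy.1) hy.2 (fun w hw hwf => ?_) ?_
    · have : w ≤ c := hmax ⟨⟨hc.1.trans (hy.1.trans hw.1), hw.2⟩, by simp [hwf]⟩
      linarith [hw.1]
    · rw [hyx]
      linarith [hy.2]
  · push Not at hfix
    exact key a le_rfl hx.1 hfix (hmaps (hmaps ⟨le_rfl, hx.1.trans hx.2⟩)).1

theorem up_wall (a b : ℝ) (f : ℝ → ℝ)
    (hf : ContinuousOn f (Set.Icc a b))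
    (hmaps : Set.MapsTo f (Set.Icc a b) (Set.Icc a b))
    (hno2 : ¬ ∃ x ∈ Set.Icc a b, ∃ y ∈ Set.Icc a b, x ≠ y ∧ f x = y ∧ f y = x) :
    ∀ n : ℕ, 0 < n → ∀ x ∈ Set.Icc a b, x < f x → x < f^[n] x := by
  -- no weak swap
  have swap : ∀ u ∈ Set.Icc a b, ∀ v ∈ Set.Icc a b, u < v → v ≤ f u → f v ≤ u → False := by
    intro u hu v hv huv h1 h2
    have hsub : Set.Icc u v ⊆ Set.Icc a b := Set.Icc_subset_Icc hu.1 hv.2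
    obtain ⟨w, hw, hwv⟩ := intermediate_value_Icc' huv.le (hf.mono hsub)
      (show v ∈ Set.Icc _ _ from ⟨h2.trans huv.le, h1⟩)
    have hne : w ≠ v := by
      rintro rfl
      linarith
    have hlt : w < v := lt_of_le_of_ne hw.2 hne
    have := two_step a b f hf hmaps hno2 w (hsub hw) (by rw [hwv]; exact hlt)
    rw [hwv] at this
    linarith [hw.1]
  intro n
  induction n using Nat.strong_induction_on with
  | _ n ih =>
    intro hn x hx hxf
    by_contra hcon
    rw [not_lt] at hcon
    have hmem : ∀ i, f^[i] x ∈ Set.Icc a b := fun i => hmaps.iterate i hx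
    have hdown : ∀ i, 0 < i → i < n → f^[i+1] x ≤ f^[i] x := by
      intro i hi hin
      by_contra h
      rw [not_le, Function.iterate_succ_apply'] at h
      have h2 := ih (n - i) (by omega) (by omega) _ (hmem i) h
      rw [← Function.iterate_add_apply, Nat.sub_add_cancel hin.le] at h2
      linarith [ih i hin hi x hx hxf]
    have hle : ∀ i, 0 < i → i < n → f^[i] x ≤ f x := by
      intro i hi
      induction i, hi using Nat.le_induction with
      | base => intro _; simp
      | succ k hk ihk => intro hkn; exact (hdown k hk (by omega)).trans (ihk (by omega))
    obtain ⟨k, rfl⟩ : ∃ k, n = k + 1 := ⟨n - 1, by omega⟩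
    rcases Nat.eq_zero_or_pos k with rfl | hk
    · simp at hcon
      linarith
    · rw [Function.iterate_succ_apply'] at hcon
      exact swap x hx _ (hmem k) (ih k (by omega) hk x hx hxf) (hle k hk (by omega)) hcon

/-- For an interval map with no 2-cycle, every term of every orbit is a wall. -/
theorem stmt_3 (a b : ℝ) (hab : a ≤ b) (f : ℝ → ℝ)
    (hf : ContinuousOn f (Set.Icc a b))
    (hmaps : Set.MapsTo f (Set.Icc a b) (Set.Icc a b))
    (hno2 : ¬ ∃ x ∈ Set.Icc a b, ∃ y ∈ Set.Icc a b, x ≠ y ∧ f x = y ∧ f y = x)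
    (x : ℝ) (hx : x ∈ Set.Icc a b) :
    ∀ m n : ℕ, m < n →
      (f^[m+1] x > f^[m] x → f^[n] x > f^[m] x) ∧
      (f^[m+1] x < f^[m] x → f^[n] x < f^[m] x) ∧
      (f^[m+1] x = f^[m] x → f^[n] x = f^[m] x) := by
  intro m n hmn
  obtain ⟨k, hk, rfl⟩ : ∃ k, 0 < k ∧ n = k + m := ⟨n - m, by omega, by omega⟩
  have hy : f^[m] x ∈ Set.Icc a b := hmaps.iterate m hx
  rw [Function.iterate_succ_apply', Function.iterate_add_apply]
  generalize f^[m] x = y at hy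
  refine ⟨up_wall a b f hf hmaps hno2 k hk y hy, fun h => ?_, fun h => Function.iterate_fixed h k⟩
  have hneg : Set.MapsTo (fun t : ℝ => -t) (Set.Icc (-b) (-a)) (Set.Icc a b) :=
    fun t ht => ⟨by linarith [ht.2], by linarith [ht.1]⟩
  have hneg' : Set.MapsTo (fun t : ℝ => -t) (Set.Icc a b) (Set.Icc (-b) (-a)) :=
    fun t ht => ⟨by linarith [ht.2], by linarith [ht.1]⟩
  have hg : ∀ j : ℕ, ∀ t, (fun s => - f (-s))^[j] (-t) = - f^[j] t := by
    intro j t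
    induction j with
    | zero => rfl
    | succ j ihj => rw [Function.iterate_succ_apply', Function.iterate_succ_apply', ihj]; simp
  have := up_wall (-b) (-a) (fun s => - f (-s)) (hf.comp continuous_neg.continuousOn hneg).neg
    (fun t ht => hneg' (hmaps (hneg ht)))
    (by
      rintro ⟨u, hu, v, hv, huv, h1, h2⟩
      exact hno2 ⟨-u, hneg hu, -v, hneg hv, fun h => huv (neg_injective h),
        by linarith, by linarith⟩)
    k hk (-y) (hneg' hy) (by simpa using h)
  rw [hg] at this
  linarith
end

section
/- Let I ⊆ ℝ be a closed bounded interval, f : I → I a continuous map admitting no 2-cycle, x ∈ I, and suppose the orbit x_n = fⁿ(x) converges to p. Then for every index i with x_i ≠ p: x_{i+1} < x_i if and only if x_i > p, and x_{i+1} > x_i if and only if x_i < p. -/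
def NoTwo (a b : ℝ) (f : ℝ → ℝ) : Prop :=
  ContinuousOn f (Set.Icc a b) ∧ Set.MapsTo f (Set.Icc a b) (Set.Icc a b) ∧
  ∀ x ∈ Set.Icc a b, f (f x) = x → f x = x

lemma NoTwo.neg {a b : ℝ} {f : ℝ → ℝ} (h : NoTwo a b f) :
    NoTwo (-b) (-a) (fun t => - f (-t)) := by
  obtain ⟨hc, hm, h2⟩ := h
  have hn : Set.MapsTo (fun t : ℝ => -t) (Set.Icc (-b) (-a)) (Set.Icc a b) := by
    intro t ht
    exact ⟨by linarith [ht.2], by linarith [ht.1]⟩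
  refine ⟨(hc.comp continuous_neg.continuousOn hn).neg, ?_, ?_⟩
  · intro t ht
    have := hm (hn ht)
    exact ⟨by linarith [this.2], by linarith [this.1]⟩
  · intro t ht hh
    simp only [neg_neg] at hh
    have := h2 (-t) (hn ht) (by linarith)
    show - f (-t) = t
    linarith

lemma lemA {a b : ℝ} {f : ℝ → ℝ} (h : NoTwo a b f) {x : ℝ} (hx : x ∈ Set.Icc a b)
    (hfx : f x < x) : f (f x) < x := by
  obtain ⟨hc, hm, h2⟩ := h
  by_contra hcon
  push Not at hcon
  have hc2 : ContinuousOn (fun y => f (f y)) (Set.Icc a b) := hc.comp hc hm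
  have hsub : Set.Icc x b ⊆ Set.Icc a b := Set.Icc_subset_Icc_left hx.1
  have hg : ContinuousOn (fun y => f (f y) - y) (Set.Icc x b) :=
    (hc2.mono hsub).sub continuousOn_id
  have hcl : IsClosed (Set.Icc x b ∩ (fun y => f (f y) - y) ⁻¹' Set.Iic 0) :=
    hg.preimage_isClosed_of_isClosed isClosed_Icc isClosed_Iic
  have hK : IsCompact (Set.Icc x b ∩ (fun y => f (f y) - y) ⁻¹' Set.Iic 0) :=
    isCompact_Icc.of_isClosed_subset hcl Set.inter_subset_left
  have hb : b ∈ Set.Icc a b := ⟨hx.1.trans hx.2, le_rfl⟩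
  obtain ⟨y0, ⟨hy0, hy0'⟩, hmin⟩ := hK.exists_isLeast
    ⟨b, ⟨hx.2, le_rfl⟩, by simpa using (hm (hm hb)).2⟩
  simp only [Set.mem_preimage, Set.mem_Iic] at hy0'
  have hsub0 : Set.Icc x y0 ⊆ Set.Icc x b := Set.Icc_subset_Icc_right hy0.2
  have hfix2 : f (f y0) = y0 := by
    obtain ⟨y, hy, hyy⟩ := intermediate_value_Icc' hy0.1 (hg.mono hsub0)
      (show (0:ℝ) ∈ _ from ⟨hy0', by simpa using hcon⟩)
    have : y0 ≤ y := hmin ⟨hsub0 hy, by simpa using hyy.le⟩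
    have e : y = y0 := le_antisymm hy.2 this
    subst e
    simp only at hyy
    linarith
  have hfix : f y0 = y0 := h2 y0 (hsub hy0) hfix2
  obtain ⟨y, hy, hyy⟩ := intermediate_value_Icc hy0.1 (hc.mono (hsub0.trans hsub))
      (show x ∈ _ from ⟨hfx.le, by rw [hfix]; exact hy0.1⟩)
  have : y0 ≤ y := hmin ⟨hsub0 hy, by
    simp only [Set.mem_preimage, Set.mem_Iic, hyy]
    linarith [hy.1]⟩
  have e : y = y0 := le_antisymm hy.2 this
  subst e
  have : y = x := by rw [← hfix, hyy]
  subst this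
  linarith

lemma lemB {a b : ℝ} {f : ℝ → ℝ} (h : NoTwo a b f) {x q : ℝ} (hx : x ∈ Set.Icc a b)
    (hfx : f x < x) (hq1 : f x ≤ q) (hqx : q ≤ x) (hq : q < f q) : f q < x := by
  obtain ⟨hc, hm, h2⟩ := id h
  by_contra hcon
  push Not at hcon
  have hsub : Set.Icc q x ⊆ Set.Icc a b :=
    Set.Icc_subset_Icc ((hm hx).1.trans hq1) hx.2
  have hg : ContinuousOn (fun y => f y - y) (Set.Icc q x) :=
    (hc.mono hsub).sub continuousOn_id
  have hcl : IsClosed (Set.Icc q x ∩ (fun y => f y - y) ⁻¹' Set.Ici 0) :=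
    hg.preimage_isClosed_of_isClosed isClosed_Icc isClosed_Ici
  have hK : IsCompact (Set.Icc q x ∩ (fun y => f y - y) ⁻¹' Set.Ici 0) :=
    isCompact_Icc.of_isClosed_subset hcl Set.inter_subset_left
  obtain ⟨z, ⟨hz, hz'⟩, hmax⟩ := hK.exists_isGreatest
    ⟨q, ⟨le_rfl, hqx⟩, by simpa using hq.le⟩
  simp only [Set.mem_preimage, Set.mem_Ici] at hz'
  have hsub1 : Set.Icc z x ⊆ Set.Icc q x := Set.Icc_subset_Icc_left hz.1
  obtain ⟨r, hr, hrq⟩ := intermediate_value_Icc' hz.2 (hc.mono (hsub1.trans hsub))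
      (show q ∈ _ from ⟨hq1, by linarith [hz.1]⟩)
  have hrr : f r < r := by
    by_contra hh
    push Not at hh
    have h3 : r ≤ z := hmax ⟨hsub1 hr, by simpa using hh⟩
    have h4 : r = q := by linarith [hz.1, hr.1]
    rw [h4] at hrq
    linarith
  have := lemA h (hsub (hsub1 hr)) hrr
  rw [hrq] at this
  linarith [hr.2]

lemma lemB' {a b : ℝ} {f : ℝ → ℝ} (h : NoTwo a b f) {x q : ℝ} (hx : x ∈ Set.Icc a b)
    (hfx : x < f x) (hq1 : q ≤ f x) (hqx : x ≤ q) (hq : f q < q) : x < f q := by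
  have := lemB h.neg (x := -x) (q := -q) ⟨by linarith [hx.2], by linarith [hx.1]⟩
    (by simpa using hfx) (by simpa using hq1) (by simpa using hqx) (by simpa using hq)
  simpa using this

lemma coppel {a b : ℝ} {f : ℝ → ℝ} (h : NoTwo a b f) (n : ℕ) : ∀ x ∈ Set.Icc a b,
    (f x < x → f^[n+1] x < x) ∧ (x < f x → x < f^[n+1] x) := by
  induction n using Nat.strong_induction_on with
  | _ n ih =>
  intro x hx
  have hfm := h.2.1 hx
  have hfixit : ∀ m, f (f x) = f x → f^[m] (f x) = f x := fun m hh =>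
    Function.iterate_fixed hh m
  rcases n with _ | n
  · simp
  have hlast : f^[n+1+1] x = f (f^[n] (f x)) := by
    rw [Function.iterate_succ_apply', Function.iterate_succ_apply]
  have hlast2 : f^[n+1+1] x = f^[n+1] (f x) := Function.iterate_succ_apply _ _ _
  have i1 := ih n (by omega) (f x) hfm
  have i2 := ih n (by omega) x hx
  rw [Function.iterate_succ_apply f n x] at i2
  constructor
  · intro hlt
    by_contra hcon
    push Not at hcon
    have hU : f x < f (f x) := by
      rcases lt_trichotomy (f x) (f (f x)) with h1 | h1 | h1
      · exact h1
      · rw [hlast2, hfixit _ h1.symm] at hcon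
        linarith
      · have := i1.1 h1
        rw [hlast2] at hcon
        linarith
    have hq : f x ≤ f^[n] (f x) := by
      rcases n with _ | m
      · simp
      · exact ((ih m (by omega) (f x) hfm).2 hU).le
    have hq2 := i2.1 hlt
    rw [hlast] at hcon
    linarith [lemB h hx hlt hq hq2.le (by linarith)]
  · intro hlt
    by_contra hcon
    push Not at hcon
    have hU : f (f x) < f x := by
      rcases lt_trichotomy (f x) (f (f x)) with h1 | h1 | h1
      · have := i1.2 h1
        rw [hlast2] at hcon
        linarith
      · rw [hlast2, hfixit _ h1.symm] at hcon
        linarith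
      · exact h1
    have hq : f^[n] (f x) ≤ f x := by
      rcases n with _ | m
      · simp
      · exact ((ih m (by omega) (f x) hfm).1 hU).le
    have hq2 := i2.2 hlt
    rw [hlast] at hcon
    linarith [lemB' h hx hlt hq hq2.le (by linarith)]

/-- For an orbit of a map with no 2-cycle converging to p, each term moves left
iff it is above p and moves right iff it is below p. -/
theorem stmt_4 (a b : ℝ) (hab : a ≤ b) (f : ℝ → ℝ)
    (hf : ContinuousOn f (Set.Icc a b))
    (hmaps : Set.MapsTo f (Set.Icc a b) (Set.Icc a b))
    (hno2 : ¬ ∃ x ∈ Set.Icc a b, ∃ y ∈ Set.Icc a b, x ≠ y ∧ f x = y ∧ f y = x)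
    (x : ℝ) (hx : x ∈ Set.Icc a b) (p : ℝ)
    (htend : Filter.Tendsto (fun n => f^[n] x) Filter.atTop (nhds p)) :
    ∀ i : ℕ, f^[i] x ≠ p →
      (f^[i+1] x < f^[i] x ↔ p < f^[i] x) ∧
      (f^[i+1] x > f^[i] x ↔ f^[i] x < p) := by
  intro i hi
  have h : NoTwo a b f := ⟨hf, hmaps, fun x hx hh => by
    by_contra hne
    exact hno2 ⟨x, hx, f x, hmaps hx, fun e => hne e.symm, rfl, hh⟩⟩
  have hy : f^[i] x ∈ Set.Icc a b := hmaps.iterate i hx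
  have ht : Filter.Tendsto (fun n => f^[n+1] (f^[i] x)) Filter.atTop (nhds p) := by
    have := htend.comp (Filter.tendsto_add_atTop_nat (1+i))
    refine this.congr fun n => ?_
    simp only [Function.comp]
    rw [← Function.iterate_add_apply, add_assoc]
  rw [Function.iterate_succ_apply']
  generalize f^[i] x = y at *
  have hD : f y < y → p < y := fun hlt => lt_of_le_of_ne
    (le_of_tendsto' ht fun n => ((coppel h n y hy).1 hlt).le) hi.symm
  have hU : y < f y → y < p := fun hlt => lt_of_le_of_ne
    (ge_of_tendsto' ht fun n => ((coppel h n y hy).2 hlt).le) hi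
  have hne : f y ≠ y := fun e => hi (tendsto_nhds_unique
    (tendsto_const_nhds.congr fun n => (Function.iterate_fixed e (n+1)).symm) ht)
  refine ⟨⟨hD, fun hp => ?_⟩, ⟨hU, fun hp => ?_⟩⟩
  · rcases lt_or_gt_of_ne hne with h1 | h1
    · exact h1
    · linarith [hU h1]
  · rcases lt_or_gt_of_ne hne with h1 | h1
    · linarith [hD h1]
    · exact h1
end

section
/- Let (a_n)_{n≥0} be a sequence of pairwise distinct real numbers converging to some limit. Then every term of (a_n) is a wall if and only if there exists a set S ⊆ ℕ such that the subsequence of (a_n) indexed by S is strictly increasing, the subsequence indexed by the complement of S is strictly decreasing, and a_i < a_j whenever i ∈ S and j ∉ S (one of the two index sets may be finite or empty). -/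
/-- For a convergent sequence of distinct reals, every term is a wall iff the sequence
splits into an increasing subsequence lying entirely to the left of a decreasing
subsequence. -/
theorem stmt_6 (a : ℕ → ℝ) (hinj : Function.Injective a)
    (hconv : ∃ L : ℝ, Filter.Tendsto a Filter.atTop (nhds L)) :
    (∀ n : ℕ,
      (a (n+1) > a n → ∀ m, n < m → a m > a n) ∧
      (a (n+1) < a n → ∀ m, n < m → a m < a n) ∧
      (a (n+1) = a n → ∀ m, n < m → a m = a n)) ↔
    (∃ S : Set ℕ,
      (∀ i ∈ S, ∀ j ∈ S, i < j → a i < a j) ∧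
      (∀ i ∉ S, ∀ j ∉ S, i < j → a j < a i) ∧
      (∀ i ∈ S, ∀ j ∉ S, a i < a j)) := by
  constructor
  · intro h
    have hne : ∀ n, ¬ a n < a (n+1) → a (n+1) < a n := by
      intro n hn
      refine lt_of_le_of_ne (not_lt.mp hn) ?_
      intro e
      have := hinj e
      omega
    refine ⟨{n | a n < a (n+1)}, ?_, ?_, ?_⟩
    · intro i hi j _ hij
      exact (h i).1 hi j hij
    · intro i hi j _ hij
      exact (h i).2.1 (hne i hi) j hij
    · intro i hi j hj
      rcases lt_trichotomy i j with hij | hij | hij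
      · exact (h i).1 hi j hij
      · subst hij
        exact absurd hi hj
      · exact (h j).2.1 (hne j hj) i hij
  · rintro ⟨S, h1, h2, h3⟩ n
    have key : (∀ m, n < m → a n < a m) ∨ (∀ m, n < m → a m < a n) := by
      by_cases hn : n ∈ S
      · left
        intro m hm
        by_cases hmS : m ∈ S
        · exact h1 n hn m hmS hm
        · exact h3 n hn m hmS
      · right
        intro m hm
        by_cases hmS : m ∈ S
        · exact h3 m hmS n hn
        · exact h2 n hn m hmS hm
    rcases key with k | k
    · have k1 := k (n+1) (Nat.lt_succ_self n)
      exact ⟨fun _ m hm => k m hm, fun e => absurd e (not_lt.mpr k1.le), fun e => absurd e k1.ne'⟩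
    · have k1 := k (n+1) (Nat.lt_succ_self n)
      exact ⟨fun e => absurd e (not_lt.mpr k1.le), fun _ m hm => k m hm, fun e => absurd e k1.ne⟩
end

section
/- Let (a_n)_{n≥0} be a sequence of pairwise distinct real numbers converging to some limit, such that every term of (a_n) is a wall. Then there exist a closed bounded interval I ⊆ ℝ, a continuous map f : I → I admitting no 2-cycle, and a point x ∈ I such that the sequence (fⁿ(x))_{n≥0} has the same order pattern as (a_n); that is, for all m, n: fᵐ(x) < fⁿ(x) if and only if a_m < a_n. -/
/-- Every convergent sequence of distinct reals all of whose terms are walls is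
realized (up to order pattern) as an orbit of an interval map with no 2-cycle. -/
theorem stmt_7 (a : ℕ → ℝ) (hinj : Function.Injective a)
    (hconv : ∃ L : ℝ, Filter.Tendsto a Filter.atTop (nhds L))
    (hwall : ∀ n : ℕ,
      (a (n+1) > a n → ∀ m, n < m → a m > a n) ∧
      (a (n+1) < a n → ∀ m, n < m → a m < a n) ∧
      (a (n+1) = a n → ∀ m, n < m → a m = a n)) :
    ∃ (c d : ℝ) (f : ℝ → ℝ), c ≤ d ∧
      ContinuousOn f (Set.Icc c d) ∧
      Set.MapsTo f (Set.Icc c d) (Set.Icc c d) ∧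
      (¬ ∃ x ∈ Set.Icc c d, ∃ y ∈ Set.Icc c d, x ≠ y ∧ f x = y ∧ f y = x) ∧
      ∃ x ∈ Set.Icc c d, ∀ m n : ℕ, (f^[m] x < f^[n] x ↔ a m < a n) := by
  obtain ⟨b, hb, hsgn⟩ : ∃ b : ℕ → ℝ, (∀ n, |b n| = (1/2)^n) ∧
      (∀ n, (a n < a (n+1) ∧ b n < 0) ∨ (a (n+1) < a n ∧ 0 < b n)) := by
    refine ⟨fun n => (if a n < a (n+1) then -1 else 1) * (1/2)^n, fun n => ?_, fun n => ?_⟩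
    · have : (0:ℝ) < (1/2)^n := by positivity
      dsimp only
      split_ifs <;> simp [abs_mul]
    · have hp : (0:ℝ) < (1/2)^n := by positivity
      have hne : a (n+1) ≠ a n := fun h => by simpa using hinj h
      by_cases h : a n < a (n+1)
      · left; refine ⟨h, ?_⟩
        simp only [h, if_true]; linarith
      · right; refine ⟨lt_of_le_of_ne (not_lt.mp h) hne, ?_⟩
        simp only [h, if_false]; linarith
  have hpow : ∀ m n, m < n → |b n| ≤ (1/2)^m / 2 := by
    intro m n h
    rw [hb]
    have : ((1:ℝ)/2)^n ≤ (1/2)^(m+1) :=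
      pow_le_pow_of_le_one (by norm_num) (by norm_num) h
    rw [pow_succ] at this; linarith
  have key : ∀ m n, m < n → (b m < b n ↔ a m < a n) ∧ (b n < b m ↔ a n < a m) := by
    intro m n h
    have hp : (0:ℝ) < (1/2)^m := by positivity
    have h1 := abs_le.mp (hpow m n h)
    have h2 := hb m
    rcases hsgn m with ⟨h3, h4⟩ | ⟨h3, h4⟩
    · have h5 := (hwall m).1 h3 n h
      rw [abs_of_neg h4] at h2
      constructor <;> constructor <;> intro _ <;> linarith
    · have h5 := (hwall m).2.1 h3 n h
      rw [abs_of_pos h4] at h2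
      constructor <;> constructor <;> intro _ <;> linarith
  have hpat : ∀ m n, b m < b n ↔ a m < a n := by
    intro m n
    rcases lt_trichotomy m n with h | h | h
    · exact (key m n h).1
    · subst h; simp
    · exact (key n m h).2
  have hbinj : Function.Injective b := by
    intro m n h
    apply hinj
    apply le_antisymm
    · rw [← not_lt, ← hpat]; exact h.le.not_gt
    · rw [← not_lt, ← hpat]; exact h.ge.not_gt
  have hdist : ∀ m n, m < n → |b (m+1) - b (n+1)| ≤ 2 * |b m - b n| := by
    intro m n h
    have hp : (0:ℝ) < (1/2)^m := by positivity
    have h1 := hpow m n h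
    have h2 := hpow m (m+1) (by omega)
    have h3 := hpow m (n+1) (by omega)
    have h4 := abs_sub_abs_le_abs_sub (b m) (b n)
    have h5 := abs_sub (b (m+1)) (b (n+1))
    rw [hb m] at h4
    linarith
  have hlip : LipschitzOnWith 2 (fun x => b (Function.invFun b x + 1)) (Set.range b) := by
    apply LipschitzOnWith.of_dist_le_mul
    rintro _ ⟨m, rfl⟩ _ ⟨n, rfl⟩
    simp only [Function.leftInverse_invFun hbinj _, Real.dist_eq]
    push_cast
    rcases lt_trichotomy m n with h | h | h
    · exact hdist m n h
    · subst h; simp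
    · rw [abs_sub_comm, abs_sub_comm (b m)]; exact hdist n m h
  obtain ⟨g, hg, hgb⟩ := hlip.extend_real
  have hgb' : ∀ n, g (b n) = b (n+1) := by
    intro n
    have := hgb (Set.mem_range_self n)
    simp only [Function.leftInverse_invFun hbinj _] at this
    exact this.symm
  let f : ℝ → ℝ := fun x => max (-(|x|/2)) (min (|x|/2) (g x))
  have hf : ∀ x, |f x| ≤ |x|/2 := by
    intro x
    have := abs_nonneg x
    exact abs_le.mpr ⟨le_max_left _ _, max_le (by linarith) (min_le_left _ _)⟩
  have hfb : ∀ n, f (b n) = b (n+1) := by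
    intro n
    have h := hpow n (n+1) (by omega)
    rw [← hb n] at h
    have h := abs_le.mp h
    simp only [f, hgb']
    rw [min_eq_right h.2, max_eq_right h.1]
  have hit : ∀ n, f^[n] (b 0) = b n := by
    intro n
    induction n with
    | zero => rfl
    | succ k ih => rw [Function.iterate_succ_apply', ih, hfb]
  refine ⟨-1, 1, f, by norm_num, ?_, ?_, ?_, b 0, ?_, ?_⟩
  · have := hg.continuous
    exact Continuous.continuousOn (by fun_prop)
  · intro x hx
    have h1 := abs_le.mpr hx
    exact abs_le.mp (by linarith [hf x])
  · rintro ⟨x, -, y, -, hne, hxy, hyx⟩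
    have h1 := hf x
    have h2 := hf y
    rw [hxy] at h1
    rw [hyx] at h2
    have hx0 : |x| = 0 := by linarith [abs_nonneg x, abs_nonneg y]
    have hy0 : |y| = 0 := by linarith [abs_nonneg x, abs_nonneg y]
    exact hne ((abs_eq_zero.mp hx0).trans (abs_eq_zero.mp hy0).symm)
  · have := hb 0
    exact abs_le.mp (by rw [this]; simp)
  · intro m n
    rw [hit, hit]; exact hpat m n
end

section
/- For every sequence s : ℕ → {L, R} there exist a continuous map f : [−1, 1] → [−1, 1] admitting no 2-cycle and a point x ∈ [−1, 1] such that for every n: if s(n) = L then f^{n+1}(x) < fⁿ(x), and if s(n) = R then f^{n+1}(x) > fⁿ(x). -/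
inductive LR : Type
  | L : LR
  | R : LR

/-- The orbit: magnitude halves, sign is prescribed by the tag. -/
noncomputable def orb (s : ℕ → LR) (n : ℕ) : ℝ :=
  match s n with
  | LR.L => (1 / 2 : ℝ) ^ n
  | LR.R => -(1 / 2 : ℝ) ^ n

lemma orb_abs (s : ℕ → LR) (n : ℕ) : |orb s n| = (1 / 2 : ℝ) ^ n := by
  have h : (0 : ℝ) < (1 / 2 : ℝ) ^ n := by positivity
  unfold orb
  cases s n
  · exact abs_of_pos h
  · simp only [abs_neg]
    exact abs_of_pos h

lemma orb_inj (s : ℕ → LR) : Function.Injective (orb s) := by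
  intro m n h
  have h2 : (1 / 2 : ℝ) ^ m = (1 / 2 : ℝ) ^ n := by rw [← orb_abs s m, ← orb_abs s n, h]
  exact pow_right_injective₀ (by norm_num) (by norm_num) h2

lemma orb_lip (s : ℕ → LR) (n m : ℕ) (h : n < m) :
    |orb s (n + 1) - orb s (m + 1)| ≤ 2 * |orb s n - orb s m| := by
  have h1 := abs_sub (orb s (n + 1)) (orb s (m + 1))
  have h2 := abs_sub_abs_le_abs_sub (orb s n) (orb s m)
  simp only [orb_abs] at h1 h2
  have h3 : (1 / 2 : ℝ) ^ m ≤ (1 / 2 : ℝ) ^ (n + 1) :=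
    pow_le_pow_of_le_one (by norm_num) (by norm_num) h
  have h4 : (0 : ℝ) < (1 / 2 : ℝ) ^ n := by positivity
  rw [pow_succ] at h1 h3
  rw [pow_succ] at h1
  linarith

lemma orb_lip' (s : ℕ → LR) (n m : ℕ) :
    |orb s (n + 1) - orb s (m + 1)| ≤ 2 * |orb s n - orb s m| := by
  rcases lt_trichotomy n m with h | h | h
  · exact orb_lip s n m h
  · subst h; simp
  · rw [abs_sub_comm, abs_sub_comm (orb s n)]
    exact orb_lip s m n h

lemma exists_map (s : ℕ → LR) : ∃ f : ℝ → ℝ, Continuous f ∧ (∀ x, |f x| ≤ |x| / 2) ∧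
    ∀ n, f (orb s n) = orb s (n + 1) := by
  have hinv : ∀ n, Function.invFun (orb s) (orb s n) = n :=
    Function.leftInverse_invFun (orb_inj s)
  have hL : LipschitzOnWith 2 (fun y => orb s (Function.invFun (orb s) y + 1))
      (Set.range (orb s)) := by
    apply LipschitzOnWith.of_dist_le_mul
    rintro _ ⟨n, rfl⟩ _ ⟨m, rfl⟩
    simp only [hinv, Real.dist_eq]
    exact orb_lip' s n m
  obtain ⟨F, hF, hE⟩ := hL.extend_real
  refine ⟨fun x => max (-(|x| / 2)) (min (|x| / 2) (F x)), ?_, ?_, ?_⟩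
  · have := hF.continuous
    fun_prop
  · intro x
    have := abs_nonneg x
    rw [abs_le]
    exact ⟨le_max_left _ _, max_le (by linarith) (min_le_left _ _)⟩
  · intro n
    have h1 : F (orb s n) = orb s (n + 1) := by
      rw [← hE ⟨n, rfl⟩]
      simp only [hinv]
    have h2 : |orb s (n + 1)| ≤ |orb s n| / 2 := by
      rw [orb_abs, orb_abs, pow_succ]; linarith
    rw [abs_le] at h2
    simp only [h1]
    rw [min_eq_right h2.2, max_eq_right h2.1]

/-- Every L-R sequence is realized as the tag of an orbit of some interval map
on [-1,1] with no 2-cycle. -/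
theorem stmt_9 (s : ℕ → LR) :
    ∃ f : ℝ → ℝ,
      ContinuousOn f (Set.Icc (-1 : ℝ) 1) ∧
      Set.MapsTo f (Set.Icc (-1 : ℝ) 1) (Set.Icc (-1 : ℝ) 1) ∧
      (¬ ∃ x ∈ Set.Icc (-1 : ℝ) 1, ∃ y ∈ Set.Icc (-1 : ℝ) 1,
        x ≠ y ∧ f x = y ∧ f y = x) ∧
      ∃ x ∈ Set.Icc (-1 : ℝ) 1, ∀ n : ℕ,
        (s n = LR.L → f^[n+1] x < f^[n] x) ∧
        (s n = LR.R → f^[n+1] x > f^[n] x) := by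
  obtain ⟨f, hc, hb, ho⟩ := exists_map s
  have hit : ∀ n, f^[n] (orb s 0) = orb s n := by
    intro n
    induction n with
    | zero => rfl
    | succ k ih => rw [Function.iterate_succ_apply', ih, ho]
  refine ⟨f, hc.continuousOn, ?_, ?_, orb s 0, ?_, ?_⟩
  · intro x hx
    have h1 : |x| ≤ 1 := abs_le.2 hx
    have h2 := hb x
    have h3 := abs_nonneg x
    exact abs_le.1 (by linarith)
  · rintro ⟨x, -, y, -, hne, hxy, hyx⟩
    have h1 := hb x
    have h2 := hb y
    rw [hxy] at h1
    rw [hyx] at h2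
    have h3 := abs_nonneg x
    have h4 := abs_nonneg y
    have h5 : x = 0 := abs_eq_zero.1 (by linarith)
    have h6 : y = 0 := abs_eq_zero.1 (by linarith)
    exact hne (h5.trans h6.symm)
  · exact abs_le.1 (by rw [orb_abs]; norm_num)
  · intro n
    rw [hit, hit]
    have h1 := abs_le.1 (orb_abs s (n + 1)).le
    have h4 : (0 : ℝ) < (1 / 2 : ℝ) ^ n := by positivity
    rw [pow_succ] at h1
    constructor
    · intro h
      have : orb s n = (1 / 2 : ℝ) ^ n := by simp only [orb, h]
      linarith [h1.2]
    · intro h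
      have : orb s n = -(1 / 2 : ℝ) ^ n := by simp only [orb, h]
      linarith [h1.1]
end

section
/- Let 0 < r < 1 and define f : [−1, 1] → ℝ by f(x) = r·x·sin(1/x) for x ≠ 0 and f(0) = 0. Then f is continuous, maps [−1, 1] into itself, admits no 2-cycle (i.e., there is no x ∈ [−1, 1] with f(f(x)) = x and f(x) ≠ x), and 0 is the unique fixed point of f. -/
/-- For 0 < r < 1, the map x ↦ r x sin(1/x) (with value 0 at 0) is a continuous
self-map of [-1,1] with no 2-cycle whose unique fixed point is 0. -/
theorem stmt_10 (r : ℝ) (hr0 : 0 < r) (hr1 : r < 1) (f : ℝ → ℝ)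
    (hf0 : f 0 = 0) (hfx : ∀ x : ℝ, x ≠ 0 → f x = r * x * Real.sin (1 / x)) :
    ContinuousOn f (Set.Icc (-1 : ℝ) 1) ∧
    Set.MapsTo f (Set.Icc (-1 : ℝ) 1) (Set.Icc (-1 : ℝ) 1) ∧
    (¬ ∃ x ∈ Set.Icc (-1 : ℝ) 1, f (f x) = x ∧ f x ≠ x) ∧
    (∀ x ∈ Set.Icc (-1 : ℝ) 1, f x = x → x = 0) := by
  have key : ∀ x, |f x| ≤ r * |x| := by
    intro x
    by_cases hx : x = 0
    · simp [hx, hf0]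
    · rw [hfx x hx, abs_mul, abs_mul, abs_of_pos hr0]
      exact mul_le_of_le_one_right (by positivity) (Real.abs_sin_le_one _)
  have small : ∀ x, |x| ≤ r * |x| → x = 0 := by
    intro x h
    have h0 := abs_nonneg x
    have : |x| = 0 := by nlinarith
    exact abs_eq_zero.mp this
  have hcont : Continuous f := by
    rw [continuous_iff_continuousAt]
    intro x
    by_cases hx : x = 0
    · subst hx
      unfold ContinuousAt
      rw [hf0]
      refine squeeze_zero_norm (a := fun y : ℝ => r * |y|) (fun y => key y) ?_
      have h : Continuous (fun y : ℝ => r * |y|) := by fun_prop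
      simpa using h.tendsto 0
    · have h : ContinuousAt (fun y : ℝ => r * y * Real.sin (1 / y)) x := by
        fun_prop (disch := exact hx)
      refine h.congr ?_
      filter_upwards [isOpen_ne.mem_nhds hx] with y hy
      exact (hfx y hy).symm
  refine ⟨hcont.continuousOn, ?_, ?_, ?_⟩
  · intro x hx
    have h1 : |x| ≤ 1 := abs_le.mpr hx
    have h2 := key x
    exact abs_le.mp (by nlinarith [abs_nonneg x])
  · rintro ⟨x, -, h1, h2⟩
    have h3 := key (f x)
    rw [h1] at h3
    have h4 := key x
    have hx : x = 0 := small x (by nlinarith [abs_nonneg x, abs_nonneg (f x)])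
    exact h2 (by rw [hx, hf0])
  · intro x _ h
    have h4 := key x
    rw [h] at h4
    exact small x h4
end

section
/- Let 0 < r < 1 and define f : [−1, 1] → [−1, 1] by f(x) = r·x·sin(1/x) for x ≠ 0 and f(0) = 0. For every sequence s : ℕ → {L, R} there exists x ∈ [−1, 1] such that for every n ≥ 0: if s(n) = L then fⁿ(x) > 0, and if s(n) = R then fⁿ(x) < 0. -/
lemma aux_seq (f : ℝ → ℝ) (hf : Continuous f) (I : ℕ → Set ℝ) (hc : ∀ n, IsCompact (I n))
    (hne : ∀ n, (I n).Nonempty) (hs : ∀ n, ∀ y ∈ I (n+1), ∃ z ∈ I n, f z = y) :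
    ∃ x, ∀ n, f^[n] x ∈ I n := by
  have key : ∀ n, ∀ y ∈ I n, ∃ x, (∀ k ≤ n, f^[k] x ∈ I k) ∧ f^[n] x = y := by
    intro n
    induction n with
    | zero =>
      intro y hy
      refine ⟨y, ?_, rfl⟩
      intro k hk
      obtain rfl : k = 0 := by omega
      exact hy
    | succ n ih =>
      intro y hy
      obtain ⟨z, hz, rfl⟩ := hs n y hy
      obtain ⟨x, hx, hxz⟩ := ih z hz
      have e : f^[n+1] x = f z := by rw [Function.iterate_succ_apply', hxz]
      refine ⟨x, ?_, e⟩
      intro k hk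
      rcases Nat.lt_or_ge n k with h | h
      · obtain rfl : k = n + 1 := by omega
        rw [e]; exact hy
      · exact hx k h
  let K : ℕ → Set ℝ := fun n => ⋂ k ∈ Set.Iic n, (f^[k]) ⁻¹' (I k)
  have hcl : ∀ n, IsClosed (K n) := fun n =>
    isClosed_biInter fun k _ => (hc k).isClosed.preimage (hf.iterate k)
  have h0 : K 0 = I 0 := by simp [K]
  obtain ⟨x, hx⟩ := IsCompact.nonempty_iInter_of_sequence_nonempty_isCompact_isClosed K
    (by
      intro n x hx
      simp only [K, Set.mem_iInter, Set.mem_Iic] at hx ⊢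
      exact fun k hk => hx k (by omega))
    (by
      intro n
      obtain ⟨y, hy⟩ := hne n
      obtain ⟨x, hx, -⟩ := key n y hy
      refine ⟨x, ?_⟩
      simp only [K, Set.mem_iInter, Set.mem_Iic]
      exact hx)
    (by rw [h0]; exact hc 0) hcl
  refine ⟨x, fun n => ?_⟩
  have := Set.mem_iInter.1 hx n
  simp only [K, Set.mem_iInter, Set.mem_Iic] at this
  exact this n le_rfl

lemma aux_cont (r : ℝ) (hr0 : 0 < r) (f : ℝ → ℝ)
    (hf0 : f 0 = 0) (hfx : ∀ x : ℝ, x ≠ 0 → f x = r * x * Real.sin (1 / x)) :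
    Continuous f := by
  rw [continuous_iff_continuousAt]
  intro x
  by_cases hx : x = 0
  · subst hx
    unfold ContinuousAt
    rw [hf0]
    have hb : ∀ x, ‖f x‖ ≤ r * |x| := by
      intro x
      by_cases h : x = 0
      · simp [h, hf0]
      · rw [hfx x h, Real.norm_eq_abs, abs_mul, abs_mul, abs_of_pos hr0]
        exact mul_le_of_le_one_right (by positivity) (Real.abs_sin_le_one _)
    refine squeeze_zero_norm hb ?_
    have : Continuous fun x : ℝ => r * |x| := by fun_prop
    simpa using this.tendsto 0
  · have h1 : ContinuousAt (fun x : ℝ => r * x * Real.sin (1 / x)) x := by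
      have : ContinuousAt (fun x : ℝ => 1 / x) x := by
        simpa using continuousAt_inv₀ hx
      exact (continuousAt_const.mul continuousAt_id).mul
        (Real.continuous_sin.continuousAt.comp this)
    refine h1.congr ?_
    filter_upwards [isOpen_ne.mem_nhds hx] with y hy
    exact (hfx y hy).symm

lemma aux_int (r : ℝ) (hr0 : 0 < r) (f : ℝ → ℝ) (hf : Continuous f)
    (hfx : ∀ x : ℝ, x ≠ 0 → f x = r * x * Real.sin (1 / x)) (e : ℝ) (he : 0 < e) :
    ∃ a b d : ℝ, 0 < a ∧ a ≤ b ∧ b < e ∧ 0 < d ∧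
      ∀ y, |y| ≤ d → ∃ z ∈ Set.Icc a b, f z = y := by
  obtain ⟨k, hk⟩ := exists_nat_gt (1 / e)
  have hpi := Real.pi_gt_three
  have hk0 : (0:ℝ) ≤ k := Nat.cast_nonneg k
  set u : ℝ := Real.pi / 2 + k * (2 * Real.pi) with hu
  have hu1 : (k:ℝ) < u := by nlinarith
  have hu0 : 0 < u := by linarith
  have s1 : Real.sin u = 1 := by
    rw [hu, Real.sin_add_nat_mul_two_pi, Real.sin_pi_div_two]
  have s2 : Real.sin (u + Real.pi) = -1 := by rw [Real.sin_add_pi, s1]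
  have hv0 : 0 < u + Real.pi := by linarith
  have hab : 1 / (u + Real.pi) ≤ 1 / u := one_div_le_one_div_of_le hu0 (by linarith)
  have ha : 0 < 1 / (u + Real.pi) := by positivity
  have hb : 0 < 1 / u := by positivity
  refine ⟨1 / (u + Real.pi), 1 / u, r * (1 / (u + Real.pi)), ha, hab, ?_, by positivity, ?_⟩
  · rw [div_lt_iff₀ hu0]
    rw [div_lt_iff₀ he] at hk
    nlinarith
  · intro y hy
    have fa := hfx _ ha.ne'
    have fb := hfx _ hb.ne'
    rw [one_div_one_div] at fa fb
    rw [s2] at fa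
    rw [s1] at fb
    have := intermediate_value_Icc hab hf.continuousOn
    rw [abs_le] at hy
    have h3 : r * (1 / (u + Real.pi)) ≤ r * (1 / u) := by gcongr
    exact this ⟨by rw [fa]; linarith, by rw [fb]; linarith⟩

/-- For 0 < r < 1 and f(x) = r x sin(1/x), every L-R sequence is realized:
there is a point whose n-th iterate is positive when tagged L and negative
when tagged R. -/
theorem stmt_11 (r : ℝ) (hr0 : 0 < r) (hr1 : r < 1) (f : ℝ → ℝ)
    (hf0 : f 0 = 0) (hfx : ∀ x : ℝ, x ≠ 0 → f x = r * x * Real.sin (1 / x))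
    (s : ℕ → LR) :
    ∃ x ∈ Set.Icc (-1 : ℝ) 1, ∀ n : ℕ,
      (s n = LR.L → 0 < f^[n] x) ∧
      (s n = LR.R → f^[n] x < 0) := by
  have hf := aux_cont r hr0 f hf0 hfx
  have heven : ∀ x, f (-x) = f x := by
    intro x
    by_cases h : x = 0
    · simp [h]
    · rw [hfx x h, hfx (-x) (neg_ne_zero.2 h), one_div_neg_eq_neg_one_div, Real.sin_neg]
      ring
  have H := aux_int r hr0 f hf hfx
  choose! a b d ha hab hb hd hy using H
  let e : ℕ → ℝ := fun n => d^[n] 1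
  have he : ∀ n, 0 < e n := by
    intro n
    induction n with
    | zero => simp [e]
    | succ n ih =>
      simp only [e, Function.iterate_succ_apply'] at ih ⊢
      exact hd _ ih
  have hes : ∀ n, e (n+1) = d (e n) := fun n => Function.iterate_succ_apply' d n 1
  let I : ℕ → Set ℝ := fun n => LR.rec (motive := fun _ => Set ℝ)
    (Set.Icc (a (e n)) (b (e n))) (Set.Icc (-b (e n)) (-a (e n))) (s n)
  have hL : ∀ n, s n = LR.L → I n = Set.Icc (a (e n)) (b (e n)) := by
    intro n h; simp only [I, h]
  have hR : ∀ n, s n = LR.R → I n = Set.Icc (-b (e n)) (-a (e n)) := by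
    intro n h; simp only [I, h]
  have hcase : ∀ n, s n = LR.L ∨ s n = LR.R := by
    intro n; cases s n <;> simp
  have habs : ∀ n, ∀ y ∈ I n, |y| ≤ e n := by
    intro n y hyI
    have h1 := ha _ (he n)
    have h2 := hb _ (he n)
    rw [abs_le]
    rcases hcase n with h | h
    · rw [hL n h] at hyI
      exact ⟨by linarith [hyI.1, he n], by linarith [hyI.2]⟩
    · rw [hR n h] at hyI
      exact ⟨by linarith [hyI.1], by linarith [hyI.2, he n]⟩
  obtain ⟨x, hx⟩ := aux_seq f hf I
    (by
      intro n
      rcases hcase n with h | h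
      · rw [hL n h]; exact isCompact_Icc
      · rw [hR n h]; exact isCompact_Icc)
    (by
      intro n
      have := hab _ (he n)
      rcases hcase n with h | h
      · rw [hL n h]; exact Set.nonempty_Icc.2 this
      · rw [hR n h]; exact Set.nonempty_Icc.2 (by linarith))
    (by
      intro n y hyI
      have h1 := habs _ y hyI
      rw [hes] at h1
      obtain ⟨z, hz, hzy⟩ := hy _ (he n) y h1
      rcases hcase n with h | h
      · rw [hL n h]; exact ⟨z, hz, hzy⟩
      · rw [hR n h]
        exact ⟨-z, ⟨by linarith [hz.2], by linarith [hz.1]⟩, by rw [heven, hzy]⟩)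
  refine ⟨x, ?_, ?_⟩
  · have := habs 0 x (hx 0)
    exact abs_le.1 this
  · intro n
    have h1 := hx n
    have h2 := ha _ (he n)
    constructor
    · intro h
      rw [hL n h] at h1
      linarith [h1.1]
    · intro h
      rw [hR n h] at h1
      linarith [h1.2]
end

section
/- Let 0 < r < 1 and define f : [−1, 1] → [−1, 1] by f(x) = r·x·sin(1/x) for x ≠ 0 and f(0) = 0. For every k ≥ 1 and every word w : {0, 1, …, k−1} → {L, R} there exists x ∈ [−1, 1] such that for every n < k: fⁿ(x) > 0 if w(n) = L and fⁿ(x) < 0 if w(n) = R, and moreover f^{k}(x) = 0. -/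
theorem cover_aux (r : ℝ) (hr0 : 0 < r) (f : ℝ → ℝ)
    (hfx : ∀ x : ℝ, x ≠ 0 → f x = r * x * Real.sin (1 / x)) (δ : ℝ) (hδ : 0 < δ) :
    ∃ η > 0, ∀ y, |y| < η → ∃ x, 0 < x ∧ x < δ ∧ f x = y := by
  obtain ⟨m, hm⟩ := exists_nat_gt (1 / δ + 1)
  have hpi := Real.pi_gt_three
  have hd : 0 < 1 / δ := by positivity
  have hm1 : (1 : ℝ) < m := by linarith
  have hB : 1 / δ < m * (2 * Real.pi) - Real.pi / 2 := by nlinarith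
  set B := (m : ℝ) * (2 * Real.pi) - Real.pi / 2 with hBdef
  set A := Real.pi / 2 + (m : ℝ) * (2 * Real.pi) with hAdef
  have hB0 : 0 < B := by linarith
  have hAB : B < A := by linarith
  have hA0 : 0 < A := by linarith
  have hsA : Real.sin A = 1 := by
    rw [hAdef, Real.sin_add_nat_mul_two_pi, Real.sin_pi_div_two]
  have hsB : Real.sin B = -1 := by
    have : B = -(Real.pi / 2) + (m : ℝ) * (2 * Real.pi) := by rw [hBdef]; ring
    rw [this, Real.sin_add_nat_mul_two_pi, Real.sin_neg, Real.sin_pi_div_two]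
  have hab : 1 / A < 1 / B := one_div_lt_one_div_of_lt hB0 hAB
  have ha0 : 0 < 1 / A := by positivity
  have hbd : 1 / B < δ := by
    rw [div_lt_iff₀ hB0]; rw [div_lt_iff₀ hδ] at hB; linarith
  have hfa : f (1 / A) = r * (1 / A) := by
    rw [hfx _ ha0.ne', one_div_one_div, hsA, mul_one]
  have hfb : f (1 / B) = -(r * (1 / B)) := by
    rw [hfx _ (by positivity), one_div_one_div, hsB]; ring
  have hcont : ContinuousOn f (Set.Icc (1 / A) (1 / B)) := by
    have h : ContinuousOn (fun x : ℝ => r * x * Real.sin (1 / x))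
        (Set.Icc (1 / A) (1 / B)) := by
      have h1 : ContinuousOn (fun x : ℝ => 1 / x) (Set.Icc (1 / A) (1 / B)) :=
        continuousOn_const.div continuousOn_id (fun x hx => (ha0.trans_le hx.1).ne')
      exact (by fun_prop : ContinuousOn (fun x : ℝ => r * x) _).mul
        (Real.continuous_sin.comp_continuousOn h1)
    exact h.congr (fun x hx => hfx x (ha0.trans_le hx.1).ne')
  refine ⟨r * (1 / A), by positivity, fun y hy => ?_⟩
  rw [abs_lt] at hy
  have hmul : r * (1 / A) < r * (1 / B) := mul_lt_mul_of_pos_left hab hr0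
  obtain ⟨x, hx, hxy⟩ := intermediate_value_Icc' hab.le hcont
    (show y ∈ Set.Icc _ _ from ⟨by rw [hfb]; linarith, by rw [hfa]; linarith⟩)
  exact ⟨x, ha0.trans_le hx.1, hx.2.trans_lt hbd, hxy⟩

theorem word_aux (r : ℝ) (hr0 : 0 < r) (f : ℝ → ℝ)
    (hf0 : f 0 = 0) (hfx : ∀ x : ℝ, x ≠ 0 → f x = r * x * Real.sin (1 / x))
    (k : ℕ) : ∀ (w : Fin k → LR) (δ : ℝ), 0 < δ →
    ∃ x, |x| < δ ∧
      (∀ n : Fin k,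
        (w n = LR.L → 0 < f^[(n : ℕ)] x) ∧
        (w n = LR.R → f^[(n : ℕ)] x < 0)) ∧
      f^[k] x = 0 := by
  induction k with
  | zero => exact fun w δ hδ => ⟨0, by simpa using hδ, fun n => n.elim0, rfl⟩
  | succ k ih =>
    intro w δ hδ
    obtain ⟨η, hη, hc⟩ := cover_aux r hr0 f hfx δ hδ
    obtain ⟨y, hy, hw, hk⟩ := ih (fun n => w n.succ) η hη
    obtain ⟨x, hx0, hxd, hxy⟩ := hc y hy
    have heven : f (-x) = y := by
      rw [← hxy, hfx x hx0.ne', hfx (-x) (neg_ne_zero.mpr hx0.ne'), one_div_neg_eq_neg_one_div,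
        Real.sin_neg]
      ring
    cases h0 : w 0 with
    | L =>
      refine ⟨x, by rwa [abs_of_pos hx0], fun n => ?_, by
        rw [Function.iterate_succ_apply, hxy, hk]⟩
      refine Fin.cases ?_ (fun i => ?_) n
      · simp [h0, hx0]
      · simpa [Function.iterate_succ_apply, hxy] using hw i
    | R =>
      refine ⟨-x, by rwa [abs_neg, abs_of_pos hx0], fun n => ?_, by
        rw [Function.iterate_succ_apply, heven, hk]⟩
      refine Fin.cases ?_ (fun i => ?_) n
      · simp [h0, hx0]
      · simpa [Function.iterate_succ_apply, heven] using hw i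

/-- For 0 < r < 1 and f(x) = r x sin(1/x), every finite L-R word is realized by a
point whose orbit reaches 0 right after following the word. -/
theorem stmt_12 (r : ℝ) (hr0 : 0 < r) (hr1 : r < 1) (f : ℝ → ℝ)
    (hf0 : f 0 = 0) (hfx : ∀ x : ℝ, x ≠ 0 → f x = r * x * Real.sin (1 / x))
    (k : ℕ) (hk : 1 ≤ k) (w : Fin k → LR) :
    ∃ x ∈ Set.Icc (-1 : ℝ) 1,
      (∀ n : Fin k,
        (w n = LR.L → 0 < f^[(n : ℕ)] x) ∧
        (w n = LR.R → f^[(n : ℕ)] x < 0)) ∧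
      f^[k] x = 0 := by
  obtain ⟨x, hx, h⟩ := word_aux r hr0 f hf0 hfx k w 1 one_pos
  exact ⟨x, abs_le.mp hx.le, h⟩
end

section
/- Let 0 < r < 1 and define f : [−1, 1] → [−1, 1] by f(x) = r·x·sin(1/x) for x ≠ 0 and f(0) = 0. Then for every continuous map g : [−1, 1] → [−1, 1] admitting no 2-cycle and every p ∈ [−1, 1], there exists q ∈ [−1, 1] such that the sequences (gⁿ(p))_{n≥0} and (fⁿ(q))_{n≥0} have the same order pattern; that is, for all m, n: gᵐ(p) < gⁿ(p) if and only if fᵐ(q) < fⁿ(q). -/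
open Set in
theorem base_up (g : ℝ → ℝ) (hc : ContinuousOn g (Icc (-1 : ℝ) 1))
    (hm : MapsTo g (Icc (-1 : ℝ) 1) (Icc (-1 : ℝ) 1))
    (hn : ∀ x ∈ Icc (-1 : ℝ) 1, g (g x) = x → g x = x)
    (x : ℝ) (hx : x ∈ Icc (-1 : ℝ) 1) (hgx : x < g x) : x < g (g x) := by
  by_contra hlt
  rw [not_lt] at hlt
  have hlt' : g (g x) < x := by
    rcases hlt.lt_or_eq with h | h
    · exact h
    · have := hn x hx h
      linarith
  have hc2 : ContinuousOn (fun t => g (g t)) (Icc (-1 : ℝ) 1) := hc.comp hc hm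
  have hsub : ∀ a ∈ Icc (-1 : ℝ) 1, Icc a x ⊆ Icc (-1 : ℝ) 1 := fun a ha =>
    Icc_subset_Icc ha.1 hx.2
  have hm1 : (-1 : ℝ) ∈ Icc (-1 : ℝ) 1 := by constructor <;> norm_num
  let S : Set ℝ := {t ∈ Icc (-1 : ℝ) x | t ≤ g (g t)}
  have hSc : IsClosed S := by
    apply IsClosed.isClosed_le isClosed_Icc continuousOn_id (hc2.mono (hsub _ hm1))
  have hScomp : IsCompact S := isCompact_Icc.of_isClosed_subset hSc (fun t ht => ht.1)
  have hSne : S.Nonempty := ⟨-1, ⟨le_refl _, hx.1⟩, (hm (hm hm1)).1⟩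
  obtain ⟨w, hwS, hw⟩ := hScomp.exists_isGreatest hSne
  have hwI : w ∈ Icc (-1 : ℝ) 1 := hsub _ hm1 hwS.1
  have hwx : w ≤ x := hwS.1.2
  have hwfix : g (g w) = w := by
    have hcc : ContinuousOn (fun t => g (g t) - t) (Icc w x) :=
      (hc2.mono (hsub w hwI)).sub continuousOn_id
    have := intermediate_value_Icc' hwx hcc
    have h0 : (0 : ℝ) ∈ Icc (g (g x) - x) (g (g w) - w) :=
      ⟨by linarith, by linarith [hwS.2]⟩
    obtain ⟨t, ht, ht0⟩ := this h0
    have ht0' : g (g t) = t := by simpa [sub_eq_zero] using ht0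
    have : t ≤ w := hw ⟨⟨hwI.1.trans ht.1, ht.2⟩, ht0'.ge⟩
    have : t = w := le_antisymm this ht.1
    rw [← this]; exact ht0'
  have hgw := hn w hwI hwfix
  obtain ⟨t, ht, hgt⟩ := intermediate_value_Icc hwx (hc.mono (hsub w hwI))
    (show x ∈ Icc (g w) (g x) from ⟨by rw [hgw]; exact hwx, hgx.le⟩)
  have h1 : t ≤ w := hw ⟨⟨hwI.1.trans ht.1, ht.2⟩, by rw [hgt]; linarith [ht.2]⟩
  have h2 : t = w := le_antisymm h1 ht.1
  rw [h2, hgw] at hgt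
  rw [hgt] at hgw
  linarith

open Set in
theorem iter_up (g : ℝ → ℝ) (hc : ContinuousOn g (Icc (-1 : ℝ) 1))
    (hm : MapsTo g (Icc (-1 : ℝ) 1) (Icc (-1 : ℝ) 1))
    (hn : ∀ x ∈ Icc (-1 : ℝ) 1, g (g x) = x → g x = x) (n : ℕ) :
    ∀ x ∈ Icc (-1 : ℝ) 1, x < g x → 1 ≤ n → x < g^[n] x := by
  induction n using Nat.strong_induction_on with
  | _ n ih =>
  intro x hx hgx h1
  by_contra hlt
  rw [not_lt] at hlt
  have hI : ∀ i, g^[i] x ∈ Icc (-1 : ℝ) 1 := fun i => hm.iterate i hx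
  have hup : ∀ i, 1 ≤ i → i < n → x < g^[i] x := fun i h1 h2 => ih i h2 x hx hgx h1
  have hdown : ∀ i, 1 ≤ i → i < n → g^[i+1] x ≤ g^[i] x := by
    intro i hi1 hi2
    by_contra h
    rw [not_le, Function.iterate_succ_apply'] at h
    have := ih (n - i) (by omega) _ (hI i) h (by omega)
    rw [← Function.iterate_add_apply, Nat.sub_add_cancel hi2.le] at this
    linarith [hup i hi1 hi2]
  have hle : ∀ i, 1 ≤ i → i < n → g^[i] x ≤ g x := by
    intro i hi1
    induction i, hi1 using Nat.le_induction with
    | base => intro _; simp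
    | succ i hi ihi => intro h; exact (hdown i hi (by omega)).trans (ihi (by omega))
  have hn1 : n ≠ 1 := by
    rintro rfl
    simp at hlt; linarith
  obtain ⟨m, rfl⟩ : ∃ m, n = m + 1 := ⟨n - 1, by omega⟩
  have hmup := hup m (by omega) (by omega)
  have hmle := hle m (by omega) (by omega)
  have hbI := hI m
  rw [Function.iterate_succ_apply'] at hlt
  generalize g^[m] x = b at *
  have hsub : Icc x b ⊆ Icc (-1 : ℝ) 1 := Icc_subset_Icc hx.1 hbI.2
  have hcc : ContinuousOn (fun t => g t - t) (Icc x b) := (hc.mono hsub).sub continuousOn_id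
  obtain ⟨z, hz, hz0⟩ := intermediate_value_Icc' hmup.le hcc
    (show (0 : ℝ) ∈ Icc (g b - b) (g x - x) from ⟨by linarith, by linarith⟩)
  have hz0' : g z = z := by simpa [sub_eq_zero] using hz0
  obtain ⟨t, ht, hgt⟩ := intermediate_value_Icc' hz.1
    (hc.mono ((Icc_subset_Icc le_rfl hz.2).trans hsub))
    (show b ∈ Icc (g z) (g x) from ⟨by rw [hz0']; exact hz.2, hmle⟩)
  have hzb : z ≠ b := by rintro rfl; linarith
  have hzb' : z < b := lt_of_le_of_ne hz.2 hzb
  have := base_up g hc hm hn t (hsub ⟨ht.1, ht.2.trans hz.2⟩) (by linarith [ht.2])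
  rw [hgt] at this
  linarith [ht.1]

open Set in
theorem iter_down (g : ℝ → ℝ) (hc : ContinuousOn g (Icc (-1 : ℝ) 1))
    (hm : MapsTo g (Icc (-1 : ℝ) 1) (Icc (-1 : ℝ) 1))
    (hn : ∀ x ∈ Icc (-1 : ℝ) 1, g (g x) = x → g x = x) (n : ℕ) :
    ∀ x ∈ Icc (-1 : ℝ) 1, g x < x → 1 ≤ n → g^[n] x < x := by
  intro x hx hgx h1
  have hneg : ∀ y ∈ Icc (-1 : ℝ) 1, -y ∈ Icc (-1 : ℝ) 1 := fun y hy =>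
    ⟨by linarith [hy.2], by linarith [hy.1]⟩
  have key := iter_up (fun t => - g (-t)) ((hc.comp continuous_neg.continuousOn hneg).neg)
    (fun y hy => hneg _ (hm (hneg y hy)))
    (fun y hy h => by
      simp only [neg_neg] at h ⊢
      have := hn (-y) (hneg y hy) (by linarith)
      linarith) n (-x) (hneg x hx) (by simpa using hgx) h1
  have hconj : ∀ i, (fun t => - g (-t))^[i] (-x) = - g^[i] x := by
    intro i
    induction i with
    | zero => simp
    | succ i ih => rw [Function.iterate_succ_apply', ih, Function.iterate_succ_apply']; simp
  rw [hconj] at key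
  linarith

/-- Closed sets covering one another along `f` are followed by some orbit. -/
theorem follow (f : ℝ → ℝ) (hf : Continuous f) (C : ℕ → Set ℝ) (hC : ∀ n, IsCompact (C n))
    (hne : ∀ n, (C n).Nonempty) (hcov : ∀ n, ∀ y ∈ C (n + 1), ∃ x ∈ C n, f x = y) :
    ∃ q, ∀ n, f^[n] q ∈ C n := by
  have hback : ∀ n, ∀ y ∈ C n, ∃ x, (∀ i ≤ n, f^[i] x ∈ C i) ∧ f^[n] x = y := by
    intro n
    induction n with
    | zero =>
      intro y hy
      exact ⟨y, fun i hi => by obtain rfl : i = 0 := by omega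
                               simpa using hy, rfl⟩
    | succ n ih =>
      intro y hy
      obtain ⟨z, hz, hzy⟩ := hcov n y hy
      obtain ⟨x, hx, hxz⟩ := ih z hz
      have hl : f^[n+1] x = y := by rw [Function.iterate_succ_apply', hxz, hzy]
      refine ⟨x, fun i hi => ?_, hl⟩
      rcases Nat.lt_or_ge n i with h | h
      · obtain rfl : i = n + 1 := by omega
        rw [hl]; exact hy
      · exact hx i h
  let K : ℕ → Set ℝ := fun n => ⋂ i ∈ Set.Iic n, f^[i] ⁻¹' (C i)
  have hKc : ∀ n, IsClosed (K n) := fun n =>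
    isClosed_biInter fun i _ => (hC i).isClosed.preimage (hf.iterate i)
  obtain ⟨q, hq⟩ := IsCompact.nonempty_iInter_of_sequence_nonempty_isCompact_isClosed K
    (fun n => Set.biInter_subset_biInter_left (Set.Iic_subset_Iic.2 (Nat.le_succ n)))
    (fun n => by
      obtain ⟨y, hy⟩ := hne n
      obtain ⟨x, hx, _⟩ := hback n y hy
      exact ⟨x, by simpa [K] using hx⟩)
    ((hC 0).of_isClosed_subset (hKc 0) (fun x hx => by simpa [K] using hx)) hKc
  refine ⟨q, fun n => ?_⟩
  have := Set.mem_iInter.1 hq n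
  simp only [K, Set.mem_iInter] at this
  exact this n (Set.mem_Iic.2 le_rfl)

theorem cover (r : ℝ) (hr0 : 0 < r) (f : ℝ → ℝ) (hf : Continuous f)
    (hfx : ∀ x : ℝ, x ≠ 0 → f x = r * x * Real.sin (1 / x)) (k : ℕ) (hk : 1 ≤ k) (y : ℝ)
    (hy0 : 0 ≤ y) (hy : y ≤ r * (1 / ((k + 1/2) * Real.pi))) :
    ∃ x ∈ Set.Icc (1 / ((k + 1) * Real.pi)) (1 / (k * Real.pi)), f x = (-1) ^ k * y := by
  have hpi := Real.pi_pos
  have hk' : (1 : ℝ) ≤ k := by exact_mod_cast hk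
  have h1 : 1 / ((k + 1) * Real.pi) ≤ 1 / ((k + 1/2 : ℝ) * Real.pi) := by
    gcongr; norm_num
  have h2 : 1 / ((k + 1/2 : ℝ) * Real.pi) ≤ 1 / (k * Real.pi) := by
    gcongr; norm_num
  have hsq : ((-1 : ℝ) ^ k) * (-1) ^ k = 1 := by rw [← mul_pow]; norm_num
  have ha : f (1 / ((k + 1/2 : ℝ) * Real.pi)) =
      r * (1 / ((k + 1/2 : ℝ) * Real.pi)) * (-1) ^ k := by
    rw [hfx _ (by positivity), one_div_one_div,
      show (k + 1/2 : ℝ) * Real.pi = k * Real.pi + Real.pi / 2 by ring,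
      Real.sin_add_pi_div_two, Real.cos_nat_mul_pi]
  have hb : f (1 / (k * Real.pi)) = 0 := by
    rw [hfx _ (by positivity), one_div_one_div, Real.sin_nat_mul_pi, mul_zero]
  have hcont : ContinuousOn (fun x => (-1 : ℝ) ^ k * f x)
      (Set.Icc (1 / ((k + 1/2 : ℝ) * Real.pi)) (1 / (k * Real.pi))) :=
    (continuous_const.mul hf).continuousOn
  obtain ⟨x, hx, hxy⟩ := intermediate_value_Icc' h2 hcont
    (show y ∈ Set.Icc _ _ from ⟨by simp only [hb]; simpa using hy0, by
      simp only [ha]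
      calc y ≤ r * (1 / ((k + 1/2) * Real.pi)) := hy
        _ = r * (1 / ((k + 1/2) * Real.pi)) * ((-1) ^ k * (-1) ^ k) := by rw [hsq, mul_one]
        _ = _ := by ring
        _ ≤ _ := le_rfl⟩)
  refine ⟨x, ⟨h1.trans hx.1, hx.2⟩, ?_⟩
  simp only at hxy
  rw [← hxy, ← mul_assoc, hsq, one_mul]

/-- Realize prescribed signs. -/
theorem realize (r : ℝ) (hr0 : 0 < r) (f : ℝ → ℝ) (hf : Continuous f) (hf0 : f 0 = 0)
    (hfx : ∀ x : ℝ, x ≠ 0 → f x = r * x * Real.sin (1 / x))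
    (d : ℕ → ℝ) (hd : ∀ n, d n = 0 → d (n + 1) = 0) :
    ∃ q ∈ Set.Icc (-1 : ℝ) 1, ∀ n, (d n = 0 → f^[n] q = 0) ∧ (0 < d n → 0 < f^[n] q) ∧
      (d n < 0 → f^[n] q < 0) := by
  have hpi := Real.pi_pos
  have heven : ∀ x, f (-x) = f x := by
    intro x
    by_cases h : x = 0
    · simp [h]
    · rw [hfx x h, hfx _ (neg_ne_zero.2 h), one_div_neg_eq_neg_one_div, Real.sin_neg]; ring
  obtain ⟨M, hM⟩ := exists_nat_gt (1 / r)
  have hM0 : 0 < (M : ℝ) := lt_trans (by positivity) hM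
  have hM1 : 1 ≤ M := by exact_mod_cast hM0
  have hMr : 1 ≤ r * M := by
    rw [div_lt_iff₀ hr0] at hM; linarith
  let k : ℕ → ℕ := fun n => 2 * (2 * M) ^ n + if d (n + 1) < 0 then 1 else 0
  have hk1 : ∀ n, 1 ≤ k n := by
    intro n
    have : 0 < (2 * M) ^ n := by positivity
    simp only [k]; omega
  have hkpos : ∀ n, (1 : ℝ) ≤ k n := fun n => by exact_mod_cast hk1 n
  have hgrow : ∀ n, 1 / (k (n + 1) * Real.pi) ≤ r * (1 / ((k n + 1 / 2) * Real.pi)) := by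
    intro n
    have hL : (1 : ℝ) ≤ (2 * M) ^ n := by
      apply one_le_pow₀
      have : (1 : ℝ) ≤ M := by exact_mod_cast hM1
      linarith
    have e1 : (k n : ℝ) ≤ 2 * (2 * M) ^ n + 1 := by
      simp only [k]; push_cast; split_ifs <;> simp
    have e2 : 2 * (2 * M : ℝ) ^ (n + 1) ≤ (k (n + 1) : ℝ) := by
      simp only [k]; push_cast; split_ifs <;> simp
    have hk := hkpos n
    have hk' := hkpos (n + 1)
    have e3 : (k n + 1 / 2 : ℝ) ≤ r * k (n + 1) := by
      calc (k n + 1 / 2 : ℝ) ≤ 4 * (2 * M) ^ n := by linarith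
        _ ≤ (r * M) * (4 * (2 * M) ^ n) := le_mul_of_one_le_left (by positivity) hMr
        _ = r * (2 * (2 * M : ℝ) ^ (n + 1)) := by ring
        _ ≤ _ := by gcongr
    rw [mul_one_div, div_le_div_iff₀ (by positivity) (by positivity)]
    nlinarith
  let C : ℕ → Set ℝ := fun n => if d n = 0 then {0} else
    if 0 < d n then Set.Icc (1 / ((k n + 1) * Real.pi)) (1 / (k n * Real.pi))
    else Set.Icc (-(1 / (k n * Real.pi))) (-(1 / ((k n + 1) * Real.pi)))
  have hle : ∀ n, 1 / ((k n + 1) * Real.pi) ≤ 1 / (k n * Real.pi) := by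
    intro n
    have hk := hkpos n
    gcongr; norm_num
  have hlo : ∀ n, 0 < 1 / ((k n + 1) * Real.pi) := by
    intro n; positivity
  have hhi : ∀ n, 1 / (k n * Real.pi) ≤ 1 := by
    intro n
    have hk := hkpos n
    rw [div_le_one (by positivity)]
    nlinarith [Real.pi_gt_three]
  obtain ⟨q, hq⟩ := follow f hf C
    (fun n => by
      simp only [C]; split_ifs
      · exact isCompact_singleton
      · exact isCompact_Icc
      · exact isCompact_Icc)
    (fun n => by
      simp only [C]; split_ifs
      · exact Set.singleton_nonempty _
      · exact Set.nonempty_Icc.2 (hle n)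
      · exact Set.nonempty_Icc.2 (neg_le_neg (hle n)))
    (by
      intro n y hy
      by_cases h0 : d n = 0
      · have h1 := hd n h0
        simp only [C, h1, if_true, Set.mem_singleton_iff] at hy
        exact ⟨0, by simp [C, h0], by rw [hf0, hy]⟩
      have hmain : ∃ x ∈ Set.Icc (1 / ((k n + 1) * Real.pi)) (1 / (k n * Real.pi)), f x = y := by
        have hpe : ¬ d (n + 1) < 0 → (-1 : ℝ) ^ k n = 1 := fun h => by simp [k, h]
        have hpo : d (n + 1) < 0 → (-1 : ℝ) ^ k n = -1 := fun h => by simp [k, h, pow_succ]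
        have hg := hgrow n
        have hl1 := hlo (n + 1)
        simp only [C] at hy
        split_ifs at hy with h1 h2
        · obtain rfl : y = 0 := hy
          obtain ⟨x, hx, hxy⟩ := cover r hr0 f hf hfx (k n) (hk1 n) 0 le_rfl
            (by positivity)
          exact ⟨x, hx, by simpa using hxy⟩
        · obtain ⟨x, hx, hxy⟩ := cover r hr0 f hf hfx (k n) (hk1 n) y
            (by linarith [hy.1]) (by linarith [hy.2])
          exact ⟨x, hx, by rw [hxy, hpe (by linarith), one_mul]⟩
        · have h3 : d (n + 1) < 0 := lt_of_le_of_ne (not_lt.1 h2) h1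
          obtain ⟨x, hx, hxy⟩ := cover r hr0 f hf hfx (k n) (hk1 n) (-y)
            (by linarith [hy.2]) (by linarith [hy.1])
          exact ⟨x, hx, by rw [hxy, hpo h3]; ring⟩
      obtain ⟨x, hx, hxy⟩ := hmain
      by_cases h2 : 0 < d n
      · exact ⟨x, by simpa only [C, h0, h2, if_true, if_false] using hx, hxy⟩
      · refine ⟨-x, ?_, by rw [heven, hxy]⟩
        simp only [C, h0, h2, if_false]
        exact ⟨neg_le_neg hx.2, neg_le_neg hx.1⟩)
  refine ⟨q, ?_, fun n => ?_⟩
  · have h := hq 0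
    have := hlo 0
    have := hhi 0
    simp only [C, Function.iterate_zero, id_eq] at h
    split_ifs at h
    · rw [Set.mem_singleton_iff] at h
      rw [h]; constructor <;> norm_num
    · exact ⟨by linarith [h.1], by linarith [h.2]⟩
    · exact ⟨by linarith [h.1], by linarith [h.2]⟩
  · have h := hq n
    have h1 := hlo n
    simp only [C] at h
    split_ifs at h with h2 h3
    · exact ⟨fun _ => h, fun h4 => by linarith, fun h4 => by linarith⟩
    · exact ⟨fun h4 => absurd h4 h2, fun _ => by linarith [h.1], fun h4 => by linarith⟩
    · exact ⟨fun h4 => absurd h4 h2, fun h4 => absurd h4 h3, fun _ => by linarith [h.2]⟩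

/-- For 0 < r < 1 the map f(x) = r x sin(1/x) on [-1,1] is universal: every orbit
pattern of any map on [-1,1] with no 2-cycle occurs as an orbit pattern of f. -/
theorem stmt_13 (r : ℝ) (hr0 : 0 < r) (hr1 : r < 1) (f : ℝ → ℝ)
    (hf0 : f 0 = 0) (hfx : ∀ x : ℝ, x ≠ 0 → f x = r * x * Real.sin (1 / x)) :
    ∀ g : ℝ → ℝ,
      ContinuousOn g (Set.Icc (-1 : ℝ) 1) →
      Set.MapsTo g (Set.Icc (-1 : ℝ) 1) (Set.Icc (-1 : ℝ) 1) →
      (¬ ∃ x ∈ Set.Icc (-1 : ℝ) 1, ∃ y ∈ Set.Icc (-1 : ℝ) 1,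
        x ≠ y ∧ g x = y ∧ g y = x) →
      ∀ p ∈ Set.Icc (-1 : ℝ) 1, ∃ q ∈ Set.Icc (-1 : ℝ) 1,
        ∀ m n : ℕ, (g^[m] p < g^[n] p ↔ f^[m] q < f^[n] q) := by
  intro g hc hm hno p hp
  have hn : ∀ x ∈ Set.Icc (-1 : ℝ) 1, g (g x) = x → g x = x := by
    intro x hx h
    by_contra hne
    exact hno ⟨x, hx, g x, hm hx, fun h => hne h.symm, rfl, h⟩
  have hbd : ∀ x, |f x| ≤ r * |x| := by
    intro x
    by_cases h : x = 0
    · simp [h, hf0]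
    · rw [hfx x h, abs_mul, abs_mul, abs_of_pos hr0]
      exact mul_le_of_le_one_right (by positivity) (Real.abs_sin_le_one _)
  have hf : Continuous f := by
    rw [continuous_iff_continuousAt]
    intro x
    by_cases h : x = 0
    · subst h
      unfold ContinuousAt
      rw [hf0]
      apply squeeze_zero_norm (a := fun x => r * |x|) hbd
      have : Continuous fun x : ℝ => r * |x| := by fun_prop
      simpa using this.tendsto 0
    · have h1 : ContinuousAt (fun x : ℝ => r * x * Real.sin (1 / x)) x := by
        have : ContinuousAt (fun x : ℝ => 1 / x) x :=
          continuousAt_const.div continuousAt_id h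
        exact (continuousAt_const.mul continuousAt_id).mul
          (Real.continuous_sin.continuousAt.comp this)
      refine h1.congr ?_
      filter_upwards [isOpen_ne.mem_nhds h] with y hy
      exact (hfx y hy).symm
  have hI : ∀ i, g^[i] p ∈ Set.Icc (-1 : ℝ) 1 := fun i => hm.iterate i hp
  obtain ⟨q, hqI, hq⟩ := realize r hr0 f hf hf0 hfx (fun n => g^[n] p - g^[n+1] p) (by
    intro n h
    have h' : g^[n] p = g^[n+1] p := sub_eq_zero.1 h
    have : g^[n+1] p = g^[n+1+1] p := by
      rw [Function.iterate_succ_apply' g (n+1), ← h', ← Function.iterate_succ_apply' g n, h']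
    exact sub_eq_zero.2 this)
  refine ⟨q, hqI, ?_⟩
  have hshr : ∀ j x, x ≠ 0 → |f^[j+1] x| < |x| := by
    intro j
    induction j with
    | zero =>
      intro x hx
      have := hbd x
      have hx' := abs_pos.2 hx
      simp only [zero_add, Function.iterate_one]
      nlinarith
    | succ j ih =>
      intro x hx
      rw [Function.iterate_succ_apply']
      have h1 := hbd (f^[j+1] x)
      have h2 := ih x hx
      nlinarith [abs_nonneg (f^[j+1] x)]
  have hz : ∀ j, f^[j] 0 = 0 := fun j => Function.iterate_fixed hf0 j
  -- comparison with later terms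
  have key : ∀ a j, (g^[a] p < g^[a+(j+1)] p ↔ f^[a] q < f^[a+(j+1)] q) ∧
      (g^[a+(j+1)] p < g^[a] p ↔ f^[a+(j+1)] q < f^[a] q) := by
    intro a j
    obtain ⟨q0, qp, qn⟩ := hq a
    have ea : ∀ (h : ℝ → ℝ) (x : ℝ), h^[a+(j+1)] x = h^[j+1] (h^[a] x) := fun h x => by
      rw [add_comm a, Function.iterate_add_apply]
    rw [ea, ea]
    rw [Function.iterate_succ_apply' g a] at q0 qp qn
    have hIa := hI a
    generalize g^[a] p = x at *
    generalize f^[a] q = y at *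
    rcases lt_trichotomy x (g x) with h | h | h
    · have h1 := iter_up g hc hm hn (j+1) x hIa h (by omega)
      have h2 := qn (by linarith)
      have h3 := hshr j y h2.ne
      rw [abs_of_neg h2] at h3
      have h4 := (abs_lt.1 h3).1
      constructor <;> constructor <;> intro <;> linarith
    · have h1 : g^[j+1] x = x := Function.iterate_fixed h.symm _
      have h2 := q0 (by linarith)
      rw [h1, h2, hz]
      simp
    · have h1 := iter_down g hc hm hn (j+1) x hIa h (by omega)
      have h2 := qp (by linarith)
      have h3 := hshr j y h2.ne'
      rw [abs_of_pos h2] at h3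
      have h4 := (abs_lt.1 h3).2
      constructor <;> constructor <;> intro <;> linarith
  intro m n
  rcases lt_trichotomy m n with h | h | h
  · obtain ⟨j, rfl⟩ := Nat.exists_eq_add_of_lt h
    exact (key m j).1
  · subst h; simp
  · obtain ⟨j, rfl⟩ := Nat.exists_eq_add_of_lt h
    exact (key n j).2
end

section
/- Let I ⊆ ℝ be a closed bounded interval and f : I → I a continuous map admitting no 2-cycle. Then f is universal for the first Sharkovsky class if and only if there exist a point p ∈ I with f(p) = p and a sequence (a_n)_{n≥0} in I converging to p such that: a_n > p when n is even, a_n < p when n is odd, f(a_n) > p when n ≡ 0 or 1 (mod 4), and f(a_n) < p when n ≡ 2 or 3 (mod 4). -/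
/-- `f`, viewed as an interval map on `[a,b]`, is universal for the first Sharkovsky
class: every orbit pattern of any interval map with no 2-cycle occurs as an orbit
pattern of `f`. -/
def IsUniversalF1 (a b : ℝ) (f : ℝ → ℝ) : Prop :=
  ∀ c d : ℝ, c ≤ d → ∀ g : ℝ → ℝ,
    ContinuousOn g (Set.Icc c d) →
    Set.MapsTo g (Set.Icc c d) (Set.Icc c d) →
    (¬ ∃ x ∈ Set.Icc c d, ∃ y ∈ Set.Icc c d, x ≠ y ∧ g x = y ∧ g y = x) →
    ∀ p ∈ Set.Icc c d, ∃ q ∈ Set.Icc a b,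
      ∀ m n : ℕ, (g^[m] p < g^[n] p ↔ f^[m] q < f^[n] q)

/-- No 2-cycle on `[c,d]`. -/
def No2 (c d : ℝ) (g : ℝ → ℝ) : Prop :=
  ¬ ∃ x ∈ Set.Icc c d, ∃ y ∈ Set.Icc c d, x ≠ y ∧ g x = y ∧ g y = x

theorem up2 {c d : ℝ} {g : ℝ → ℝ} (hg : ContinuousOn g (Set.Icc c d))
    (hm : Set.MapsTo g (Set.Icc c d) (Set.Icc c d)) (hn : No2 c d g)
    {x : ℝ} (hx : x ∈ Set.Icc c d) (hlt : x < g x) : x < g (g x) := by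
  by_contra h
  have hne : g (g x) ≠ x := fun he => hn ⟨x, hx, g x, hm hx, hlt.ne, rfl, he⟩
  have hgg : g (g x) < x := lt_of_le_of_ne (not_lt.mp h) hne
  have fix2 : ∀ t ∈ Set.Icc c d, g (g t) = t → g t = t := by
    intro t ht he
    by_contra hc
    exact hn ⟨t, ht, g t, hm ht, fun h => hc h.symm, rfl, he⟩
  have hG : ContinuousOn (fun t => g (g t) - t) (Set.Icc c d) :=
    (hg.comp hg hm).sub continuousOn_id
  have hF : ContinuousOn (fun t => g t - t) (Set.Icc c d) := hg.sub continuousOn_id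
  have hc : c ∈ Set.Icc c d := ⟨le_rfl, hx.1.trans hx.2⟩
  have sub1 : Set.Icc c x ⊆ Set.Icc c d := Set.Icc_subset_Icc le_rfl hx.2
  -- the set of fixed points below x
  have hcl : IsClosed (Set.Icc c x ∩ (fun t => g t - t) ⁻¹' {0}) :=
    (hF.mono sub1).preimage_isClosed_of_isClosed isClosed_Icc isClosed_singleton
  have hcomp : IsCompact (Set.Icc c x ∩ (fun t => g t - t) ⁻¹' {0}) :=
    isCompact_Icc.of_isClosed_subset hcl Set.inter_subset_left
  have hnon : (Set.Icc c x ∩ (fun t => g t - t) ⁻¹' {0}).Nonempty := by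
    have h0 : (0 : ℝ) ∈ Set.Icc (g (g x) - x) (g (g c) - c) :=
      ⟨by linarith, by linarith [(hm (hm hc)).1]⟩
    obtain ⟨t, ht, he⟩ := intermediate_value_Icc' hx.1 (hG.mono sub1) h0
    refine ⟨t, ht, ?_⟩
    have := fix2 t (sub1 ht) (by simpa [sub_eq_zero] using he)
    simp [this]
  obtain ⟨z, ⟨hz, hz0⟩, hzmax⟩ := hcomp.exists_isGreatest hnon
  have hgz : g z = z := by simpa [sub_eq_zero] using hz0
  have hzx : z < x := by
    rcases hz.2.lt_or_eq with h | h
    · exact h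
    · subst h; linarith
  obtain ⟨t, ht, he⟩ := intermediate_value_Icc hz.2
    (hg.mono (Set.Icc_subset_Icc hz.1 hx.2)) (show x ∈ Set.Icc (g z) (g x) from ⟨by linarith, hlt.le⟩)
  have hzt : z < t := by
    rcases ht.1.lt_or_eq with h | h
    · exact h
    · subst h; linarith
  -- g (g t) = g x > x ≥ t, but g (g x) < x
  have h0 : (0 : ℝ) ∈ Set.Icc (g (g x) - x) (g (g t) - t) :=
    ⟨by linarith, by rw [he]; linarith [ht.2]⟩
  obtain ⟨s, hs, hse⟩ := intermediate_value_Icc' ht.2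
    (hG.mono (Set.Icc_subset_Icc (hz.1.trans ht.1) hx.2)) h0
  have hsI : s ∈ Set.Icc c x := ⟨(hz.1.trans ht.1).trans hs.1, hs.2⟩
  have := fix2 s (sub1 hsI) (by simpa [sub_eq_zero] using hse)
  have := hzmax ⟨hsI, by simp [this]⟩
  linarith [hs.1]

theorem iter_mem {c d : ℝ} {g : ℝ → ℝ}
    (hm : Set.MapsTo g (Set.Icc c d) (Set.Icc c d)) {x : ℝ} (hx : x ∈ Set.Icc c d) (n : ℕ) :
    g^[n] x ∈ Set.Icc c d := hm.iterate n hx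

theorem up_all {c d : ℝ} {g : ℝ → ℝ} (hg : ContinuousOn g (Set.Icc c d))
    (hm : Set.MapsTo g (Set.Icc c d) (Set.Icc c d)) (hn : No2 c d g)
    {x : ℝ} (hx : x ∈ Set.Icc c d) (hlt : x < g x) (n : ℕ) : x < g^[n+1] x := by
  induction n using Nat.strong_induction_on with
  | _ n ih =>
  rcases n with _ | n
  · simpa using hlt
  by_contra h
  rw [not_lt] at h
  set y := g^[n+1] x with hy
  have hxy : x < y := ih n (by omega)
  have hyI : y ∈ Set.Icc c d := iter_mem hm hx _
  have hgy : g y ≤ x := by rwa [Function.iterate_succ_apply'] at h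
  have key : ∀ t ∈ Set.Icc x y, g t < y := by
    intro t ht
    by_contra hc
    rw [not_lt] at hc
    obtain ⟨s, hs, hse⟩ := intermediate_value_Icc' ht.2
      (hg.mono (Set.Icc_subset_Icc (hx.1.trans ht.1) hyI.2))
      (show y ∈ Set.Icc (g y) (g t) from ⟨by linarith, hc⟩)
    have hsy : s < y := by
      rcases hs.2.lt_or_eq with h | h
      · exact h
      · rw [h] at hse; linarith
    have := up2 hg hm hn (x := s) ⟨hx.1.trans (ht.1.trans hs.1), hs.2.trans hyI.2⟩
      (by rw [hse]; exact hsy)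
    rw [hse] at this
    linarith [ht.1, hs.1]
  have all : ∀ k, k ≤ n + 1 → g^[k] x < y := by
    intro k
    induction k with
    | zero => intro _; simpa using hxy
    | succ k ihk =>
      intro hk
      rw [Function.iterate_succ_apply']
      refine key _ ⟨?_, (ihk (by omega)).le⟩
      rcases k with _ | k
      · simp
      · exact (ih k (by omega)).le
  exact absurd (all (n+1) le_rfl) (by rw [← hy]; exact lt_irrefl _)

theorem down_all {c d : ℝ} {g : ℝ → ℝ} (hg : ContinuousOn g (Set.Icc c d))
    (hm : Set.MapsTo g (Set.Icc c d) (Set.Icc c d)) (hn : No2 c d g)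
    {x : ℝ} (hx : x ∈ Set.Icc c d) (hlt : g x < x) (n : ℕ) : g^[n+1] x < x := by
  have neg_mem : ∀ t, t ∈ Set.Icc (-d) (-c) → -t ∈ Set.Icc c d := fun t ht =>
    ⟨by linarith [ht.2], by linarith [ht.1]⟩
  have neg_mem' : ∀ t, t ∈ Set.Icc c d → -t ∈ Set.Icc (-d) (-c) := fun t ht =>
    ⟨by linarith [ht.2], by linarith [ht.1]⟩
  have key := up_all (c := -d) (d := -c) (g := fun t => - g (-t)) (x := -x)
    ((hg.comp continuous_neg.continuousOn neg_mem).neg)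
    (fun t ht => neg_mem' _ (hm (neg_mem t ht)))
    (by
      rintro ⟨u, hu, v, hv, huv, h1, h2⟩
      refine hn ⟨-u, neg_mem u hu, -v, neg_mem v hv, fun h => huv (neg_injective h), ?_, ?_⟩
      · linarith
      · linarith)
    (neg_mem' x hx) (by simpa using hlt) n
  have it : ∀ k, (fun t => - g (-t))^[k] (-x) = - g^[k] x := by
    intro k
    induction k with
    | zero => simp
    | succ k ih => rw [Function.iterate_succ_apply', Function.iterate_succ_apply', ih]; simp
  rw [it] at key
  linarith

/-- Pattern of an orbit is determined by the signs of the steps. -/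
theorem orbit_pattern {c d : ℝ} {g : ℝ → ℝ} (hg : ContinuousOn g (Set.Icc c d))
    (hm : Set.MapsTo g (Set.Icc c d) (Set.Icc c d)) (hn : No2 c d g)
    {x : ℝ} (hx : x ∈ Set.Icc c d) (m k : ℕ) :
    (g^[m] x < g^[m+k+1] x ↔ g^[m] x < g^[m+1] x) ∧
    (g^[m+k+1] x < g^[m] x ↔ g^[m+1] x < g^[m] x) := by
  have e : g^[m+k+1] x = g^[k+1] (g^[m] x) := by
    rw [← Function.iterate_add_apply, show m+k+1 = k+1+m by omega]
  have hI : g^[m] x ∈ Set.Icc c d := iter_mem hm hx m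
  rw [e, Function.iterate_succ_apply' g m x]
  generalize g^[m] x = y at hI
  rcases lt_trichotomy y (g y) with h | h | h
  · have := up_all hg hm hn hI h k
    exact ⟨by tauto, ⟨fun h' => by linarith, fun h' => by linarith⟩⟩
  · have : g^[k+1] y = y := Function.iterate_fixed h.symm _
    rw [this, ← h]; simp
  · have := down_all hg hm hn hI h k
    exact ⟨⟨fun h' => by linarith, fun h' => by linarith⟩, by tauto⟩

theorem same_pattern {a b c d : ℝ} {f g : ℝ → ℝ} (hg : ContinuousOn g (Set.Icc c d))
    (hm : Set.MapsTo g (Set.Icc c d) (Set.Icc c d)) (hn : No2 c d g)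
    (hf : ContinuousOn f (Set.Icc a b))
    (hmf : Set.MapsTo f (Set.Icc a b) (Set.Icc a b)) (hnf : No2 a b f)
    {x q : ℝ} (hx : x ∈ Set.Icc c d) (hq : q ∈ Set.Icc a b)
    (h1 : ∀ n, g^[n] x < g^[n+1] x ↔ f^[n] q < f^[n+1] q)
    (h2 : ∀ n, g^[n+1] x < g^[n] x ↔ f^[n+1] q < f^[n] q) (m n : ℕ) :
    g^[m] x < g^[n] x ↔ f^[m] q < f^[n] q := by
  rcases lt_trichotomy m n with h | h | h
  · obtain ⟨k, rfl⟩ := Nat.exists_eq_add_of_lt h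
    rw [(orbit_pattern hg hm hn hx m k).1, (orbit_pattern hf hmf hnf hq m k).1, h1]
  · subst h; simp
  · obtain ⟨k, rfl⟩ := Nat.exists_eq_add_of_lt h
    rw [(orbit_pattern hg hm hn hx n k).2, (orbit_pattern hf hmf hnf hq n k).2, h2]

theorem itinerary {a b : ℝ} {f : ℝ → ℝ} (hf : ContinuousOn f (Set.Icc a b))
    (hmf : Set.MapsTo f (Set.Icc a b) (Set.Icc a b)) (K : ℕ → Set ℝ)
    (hKc : ∀ n, IsClosed (K n)) (hKs : ∀ n, K n ⊆ Set.Icc a b) (hKn : ∀ n, (K n).Nonempty)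
    (hcov : ∀ n, K (n+1) ⊆ f '' K n) : ∃ q ∈ Set.Icc a b, ∀ n, f^[n] q ∈ K n := by
  have hit : ∀ n, ContinuousOn f^[n] (Set.Icc a b) := fun n => hf.iterate hmf n
  have back : ∀ n, ∀ t ∈ K n, ∃ q ∈ K 0, (∀ k ≤ n, f^[k] q ∈ K k) ∧ f^[n] q = t := by
    intro n
    induction n with
    | zero =>
      intro t ht
      refine ⟨t, ht, ?_, rfl⟩
      intro k hk
      obtain rfl : k = 0 := by omega
      simpa using ht
    | succ n ih =>
      intro t ht
      obtain ⟨s, hs, hst⟩ := hcov n ht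
      obtain ⟨q, hq, hqk, hqn⟩ := ih s hs
      have hl : f^[n+1] q = t := by rw [Function.iterate_succ_apply', hqn, hst]
      refine ⟨q, hq, ?_, hl⟩
      intro k hk
      rcases Nat.lt_or_ge n k with h | h
      · obtain rfl : k = n + 1 := by omega
        rw [hl]; exact ht
      · exact hqk k h
  let A : ℕ → Set ℝ := fun n => ⋂ k ∈ Set.Iic n, (Set.Icc a b ∩ f^[k] ⁻¹' K k)
  have hAcl : ∀ n, IsClosed (A n) := fun n =>
    isClosed_biInter fun k _ => (hit k).preimage_isClosed_of_isClosed isClosed_Icc (hKc k)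
  have hAI : ∀ n, A n ⊆ Set.Icc a b := by
    intro n x hx
    have := Set.mem_iInter₂.mp hx 0 (by simp)
    exact this.1
  have hne : (⋂ n, A n).Nonempty := by
    apply IsCompact.nonempty_iInter_of_sequence_nonempty_isCompact_isClosed
    · intro n
      exact Set.biInter_mono (fun k hk => le_trans hk (Nat.le_succ n)) (fun _ _ => le_rfl)
    · intro n
      obtain ⟨t, ht⟩ := hKn n
      obtain ⟨q, hq, hqk, -⟩ := back n t ht
      exact ⟨q, Set.mem_iInter₂.mpr fun k hk => ⟨hKs 0 hq, hqk k hk⟩⟩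
    · exact isCompact_Icc.of_isClosed_subset (hAcl 0) (hAI 0)
    · exact hAcl
  obtain ⟨q, hq⟩ := hne
  refine ⟨q, hAI 0 (Set.mem_iInter.mp hq 0), fun n => ?_⟩
  have := Set.mem_iInter₂.mp (Set.mem_iInter.mp hq n) n (by simp)
  exact this.2

theorem exists_delta {f : ℝ → ℝ} {p : ℝ} {u : ℕ → ℝ} (hu : ∀ n, u n ≠ p)
    (hfu : ∀ n, f (u n) ≠ p) (k : ℕ) :
    ∃ δ > 0, ∀ i < 4, δ ≤ |u (4*k+i) - p| ∧ δ ≤ |f (u (4*k+i)) - p| := by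
  have h : ∀ N : ℕ, ∃ δ > 0, ∀ i < N, δ ≤ |u (4*k+i) - p| ∧ δ ≤ |f (u (4*k+i)) - p| := by
    intro N
    induction N with
    | zero => exact ⟨1, one_pos, by simp⟩
    | succ N ih =>
      obtain ⟨δ, hδ, h⟩ := ih
      have h1 : 0 < |u (4*k+N) - p| := abs_pos.mpr (sub_ne_zero.mpr (hu _))
      have h2 : 0 < |f (u (4*k+N)) - p| := abs_pos.mpr (sub_ne_zero.mpr (hfu _))
      refine ⟨min δ (min |u (4*k+N) - p| |f (u (4*k+N)) - p|), lt_min hδ (lt_min h1 h2), ?_⟩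
      intro i hi
      rcases Nat.lt_or_ge i N with h' | h'
      · exact ⟨(min_le_left _ _).trans (h i h').1, (min_le_left _ _).trans (h i h').2⟩
      · obtain rfl : i = N := by omega
        exact ⟨(min_le_right _ _).trans (min_le_left _ _),
          (min_le_right _ _).trans (min_le_right _ _)⟩
  exact h 4

theorem backward {a b : ℝ} {f : ℝ → ℝ}
    (hf : ContinuousOn f (Set.Icc a b))
    (hmaps : Set.MapsTo f (Set.Icc a b) (Set.Icc a b))
    (hno2 : No2 a b f) {p : ℝ} (hp : p ∈ Set.Icc a b) (hfp : f p = p)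
    {u : ℕ → ℝ} (hu : ∀ n, u n ∈ Set.Icc a b)
    (hlim : Filter.Tendsto u Filter.atTop (nhds p))
    (he : ∀ n, Even n → p < u n) (ho : ∀ n, Odd n → u n < p)
    (h01 : ∀ n, n % 4 = 0 ∨ n % 4 = 1 → p < f (u n))
    (h23 : ∀ n, n % 4 = 2 ∨ n % 4 = 3 → f (u n) < p) : IsUniversalF1 a b f := by
  intro c d _ g hg hm hn x hx
  have hup : ∀ n, u n ≠ p := by
    intro n
    rcases Nat.even_or_odd n with h | h
    · exact (he n h).ne'
    · exact (ho n h).ne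
  have hfup : ∀ n, f (u n) ≠ p := by
    intro n
    have : n % 4 < 4 := Nat.mod_lt _ (by norm_num)
    by_cases h : n % 4 = 0 ∨ n % 4 = 1
    · exact (h01 n h).ne'
    · exact (h23 n (by omega)).ne
  choose δ hδ hδ2 using exists_delta hup hfup
  have hnext : ∀ k, ∃ k', ∀ i < 4, |u (4*k'+i) - p| < δ k := by
    intro k
    obtain ⟨N, hN⟩ := Metric.tendsto_atTop.mp hlim (δ k) (hδ k)
    exact ⟨N, fun i _ => by simpa [Real.dist_eq] using hN (4*N+i) (by omega)⟩
  choose φ hφ using hnext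
  let ks : ℕ → ℕ := fun n => φ^[n] 0
  have hks : ∀ n, ks (n+1) = φ (ks n) := fun n => Function.iterate_succ_apply' _ _ _
  let R : ℕ → Set ℝ := fun k => Set.uIcc (u (4*k)) (u (4*k+2))
  let L : ℕ → Set ℝ := fun k => Set.uIcc (u (4*k+1)) (u (4*k+3))
  -- sign facts at the four points
  have e0 : ∀ k, p + δ k ≤ u (4*k) := fun k => by
    have h1 := he (4*k) ⟨2*k, by ring⟩
    have h2 := (hδ2 k 0 (by norm_num)).1
    rw [add_zero, abs_of_pos (by linarith)] at h2; linarith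
  have e2 : ∀ k, p + δ k ≤ u (4*k+2) := fun k => by
    have h1 := he (4*k+2) ⟨2*k+1, by ring⟩
    have h2 := (hδ2 k 2 (by norm_num)).1
    rw [abs_of_pos (by linarith)] at h2; linarith
  have e1 : ∀ k, u (4*k+1) ≤ p - δ k := fun k => by
    have h1 := ho (4*k+1) ⟨2*k, by ring⟩
    have h2 := (hδ2 k 1 (by norm_num)).1
    rw [abs_of_neg (by linarith)] at h2; linarith
  have e3 : ∀ k, u (4*k+3) ≤ p - δ k := fun k => by
    have h1 := ho (4*k+3) ⟨2*k+1, by ring⟩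
    have h2 := (hδ2 k 3 (by norm_num)).1
    rw [abs_of_neg (by linarith)] at h2; linarith
  have f0 : ∀ k, p + δ k ≤ f (u (4*k)) := fun k => by
    have h1 := h01 (4*k) (by omega)
    have h2 := (hδ2 k 0 (by norm_num)).2
    rw [add_zero, abs_of_pos (by linarith)] at h2; linarith
  have f1 : ∀ k, p + δ k ≤ f (u (4*k+1)) := fun k => by
    have h1 := h01 (4*k+1) (by omega)
    have h2 := (hδ2 k 1 (by norm_num)).2
    rw [abs_of_pos (by linarith)] at h2; linarith
  have f2 : ∀ k, f (u (4*k+2)) ≤ p - δ k := fun k => by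
    have h1 := h23 (4*k+2) (by omega)
    have h2 := (hδ2 k 2 (by norm_num)).2
    rw [abs_of_neg (by linarith)] at h2; linarith
  have f3 : ∀ k, f (u (4*k+3)) ≤ p - δ k := fun k => by
    have h1 := h23 (4*k+3) (by omega)
    have h2 := (hδ2 k 3 (by norm_num)).2
    rw [abs_of_neg (by linarith)] at h2; linarith
  have hRs : ∀ k, R k ⊆ Set.Icc a b := fun k => Set.uIcc_subset_Icc (hu _) (hu _)
  have hLs : ∀ k, L k ⊆ Set.Icc a b := fun k => Set.uIcc_subset_Icc (hu _) (hu _)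
  have hRcov : ∀ k, Set.Icc (p - δ k) (p + δ k) ⊆ f '' R k := fun k =>
    Set.Subset.trans (by
      rw [Set.uIcc_of_ge (by linarith [f0 k, f2 k, hδ k])]
      exact Set.Icc_subset_Icc (f2 k) (f0 k)) (intermediate_value_uIcc (hf.mono (hRs k)))
  have hLcov : ∀ k, Set.Icc (p - δ k) (p + δ k) ⊆ f '' L k := fun k =>
    Set.Subset.trans (by
      rw [Set.uIcc_of_ge (by linarith [f1 k, f3 k, hδ k])]
      exact Set.Icc_subset_Icc (f3 k) (f1 k)) (intermediate_value_uIcc (hf.mono (hLs k)))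
  have hRlow : ∀ k, ∀ y ∈ R k, p + δ k ≤ y := fun k y hy =>
    (le_min (e0 k) (e2 k)).trans hy.1
  have hLhigh : ∀ k, ∀ y ∈ L k, y ≤ p - δ k := fun k y hy =>
    hy.2.trans (max_le (e1 k) (e3 k))
  have mem4 : ∀ k, ∀ i < 4, u (4 * φ k + i) ∈ Set.Ioo (p - δ k) (p + δ k) := fun k i hi => by
    have := abs_lt.mp (hφ k i hi)
    exact ⟨by linarith [this.1], by linarith [this.2]⟩
  have hRin : ∀ k, R (φ k) ⊆ Set.Ioo (p - δ k) (p + δ k) := fun k =>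
    Set.ordConnected_Ioo.uIcc_subset (mem4 k 0 (by norm_num)) (mem4 k 2 (by norm_num))
  have hLin : ∀ k, L (φ k) ⊆ Set.Ioo (p - δ k) (p + δ k) := fun k =>
    Set.ordConnected_Ioo.uIcc_subset (mem4 k 1 (by norm_num)) (mem4 k 3 (by norm_num))
  classical
  let K : ℕ → Set ℝ := fun n =>
    if g^[n] x < g^[n+1] x then L (ks n) else if g^[n+1] x < g^[n] x then R (ks n) else {p}
  have hKin : ∀ n, K (n+1) ⊆ Set.Ioo (p - δ (ks n)) (p + δ (ks n)) := by
    intro n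
    simp only [K]
    split_ifs
    · rw [hks]; exact hLin _
    · rw [hks]; exact hRin _
    · rintro _ rfl; exact ⟨by linarith [hδ (ks n)], by linarith [hδ (ks n)]⟩
  obtain ⟨q, hq, hqK⟩ := itinerary hf hmaps K
    (by
      intro n; simp only [K]; split_ifs
      · exact isClosed_Icc
      · exact isClosed_Icc
      · exact isClosed_singleton)
    (by
      intro n; simp only [K]; split_ifs
      · exact hLs _
      · exact hRs _
      · rintro _ rfl; exact hp)
    (by
      intro n; simp only [K]; split_ifs
      · exact Set.nonempty_uIcc
      · exact Set.nonempty_uIcc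
      · exact ⟨p, rfl⟩)
    (by
      intro n
      by_cases h1 : g^[n] x < g^[n+1] x
      · have : K n = L (ks n) := by simp only [K]; rw [if_pos h1]
        rw [this]
        exact ((hKin n).trans Set.Ioo_subset_Icc_self).trans (hLcov _)
      · by_cases h2 : g^[n+1] x < g^[n] x
        · have : K n = R (ks n) := by simp only [K]; rw [if_neg h1, if_pos h2]
          rw [this]
          exact ((hKin n).trans Set.Ioo_subset_Icc_self).trans (hRcov _)
        · have : K n = {p} := by simp only [K]; rw [if_neg h1, if_neg h2]
          have heq : g^[n+1] x = g^[n] x := le_antisymm (not_lt.mp h1) (not_lt.mp h2)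
          have heq2 : g^[n+1+1] x = g^[n+1] x := by
            rw [Function.iterate_succ_apply' g (n+1), heq, ← Function.iterate_succ_apply' g n, heq]
          have h' : K (n+1) = {p} := by
            simp only [K]; rw [heq2]; simp
          rw [this, h']
          simp [hfp])
  refine ⟨q, hq, same_pattern hg hm hn hf hmaps hno2 hx hq ?_ ?_⟩
  all_goals
    intro n
    have hA := hqK n
    have hB := hKin n (hqK (n+1))
    by_cases h1 : g^[n] x < g^[n+1] x
    · have : K n = L (ks n) := by simp only [K]; rw [if_pos h1]
      rw [this] at hA
      have := hLhigh _ _ hA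
      constructor <;> intro h <;> linarith [hB.1, hB.2]
    · by_cases h2 : g^[n+1] x < g^[n] x
      · have : K n = R (ks n) := by simp only [K]; rw [if_neg h1, if_pos h2]
        rw [this] at hA
        have := hRlow _ _ hA
        constructor <;> intro h <;> linarith [hB.1, hB.2]
      · have : K n = {p} := by simp only [K]; rw [if_neg h1, if_neg h2]
        rw [this] at hA
        have hA' : f^[n] q = p := hA
        have : f^[n+1] q = f^[n] q := by rw [Function.iterate_succ_apply', hA', hfp]
        rw [this]
        exact ⟨fun h => by exact absurd h (by assumption), fun h => absurd h (lt_irrefl _)⟩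

/-- The test map, oscillating around `0`. -/
noncomputable def testMap (x : ℝ) : ℝ := x / 2 * Real.cos (Real.pi * Real.logb 2 |x|)

theorem testMap_abs (x : ℝ) : |testMap x| ≤ |x| / 2 := by
  unfold testMap
  rw [abs_mul, abs_div, abs_two]
  exact mul_le_of_le_one_right (by positivity) (Real.abs_cos_le_one _)

theorem testMap_cont : Continuous testMap := by
  rw [continuous_iff_continuousAt]
  intro x
  by_cases hx : x = 0
  · subst hx
    have h0 : testMap 0 = 0 := by simp [testMap]
    rw [ContinuousAt, h0]
    apply squeeze_zero_norm (a := fun x : ℝ => |x| / 2)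
    · intro t; exact testMap_abs t
    · have : Continuous (fun x : ℝ => |x| / 2) := by fun_prop
      simpa using this.tendsto 0
  · unfold testMap Real.logb
    have : |x| ≠ 0 := abs_ne_zero.mpr hx
    fun_prop (disch := assumption)

theorem cos_logb (m : ℕ) (s : ℝ) (hs : |s| = 1) :
    testMap (s * (1/2)^m) = s * (1/2)^(m+1) * (-1)^m := by
  have h1 : Real.logb 2 |s * (1/2)^m| = -m := by
    rw [abs_mul, hs, one_mul, abs_of_pos (by positivity), Real.logb_pow]
    simp
  unfold testMap
  rw [h1]
  have : Real.pi * -(m:ℝ) = -(m * Real.pi) := by ring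
  rw [this, Real.cos_neg, Real.cos_nat_mul_pi]
  ring

theorem test_orbit (k : ℕ) : testMap^[4*k] (-1) = -(1/2)^(4*k) ∧
    testMap^[4*k+1] (-1) = -(1/2)^(4*k+1) ∧ testMap^[4*k+2] (-1) = (1/2)^(4*k+2) ∧
    testMap^[4*k+3] (-1) = (1/2)^(4*k+3) := by
  have step : ∀ j, testMap^[4*j] (-1) = -(1/2)^(4*j) → testMap^[4*j+1] (-1) = -(1/2)^(4*j+1) ∧
    testMap^[4*j+2] (-1) = (1/2)^(4*j+2) ∧
    testMap^[4*j+3] (-1) = (1/2)^(4*j+3) ∧ testMap^[4*j+4] (-1) = -(1/2)^(4*j+4) := by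
    intro j h0
    have hev : ((-1 : ℝ))^(4*j) = 1 := Even.neg_one_pow ⟨2*j, by ring⟩
    have h1 : testMap^[4*j+1] (-1) = -(1/2)^(4*j+1) := by
      rw [Function.iterate_succ_apply', h0]
      have := cos_logb (4*j) (-1) (by simp)
      rw [hev] at this
      simpa using this
    have h2 : testMap^[4*j+2] (-1) = (1/2)^(4*j+2) := by
      rw [Function.iterate_succ_apply', h1]
      have := cos_logb (4*j+1) (-1) (by simp)
      rw [pow_succ (-1 : ℝ), hev] at this
      simpa using this
    have h3 : testMap^[4*j+3] (-1) = (1/2)^(4*j+3) := by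
      rw [Function.iterate_succ_apply', h2]
      have := cos_logb (4*j+2) 1 (by simp)
      rw [pow_add (-1 : ℝ), hev] at this
      simpa using this
    have h4 : testMap^[4*j+4] (-1) = -(1/2)^(4*j+4) := by
      rw [Function.iterate_succ_apply', h3]
      have := cos_logb (4*j+3) 1 (by simp)
      rw [pow_add (-1 : ℝ), hev] at this
      norm_num at this ⊢
      simpa using this
    exact ⟨h1, h2, h3, h4⟩
  have base : ∀ j, testMap^[4*j] (-1) = -(1/2)^(4*j) := by
    intro j
    induction j with
    | zero => simp
    | succ j ih => exact (step j ih).2.2.2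
  exact ⟨base k, (step k (base k)).1, (step k (base k)).2.1, (step k (base k)).2.2.1⟩

theorem forward {a b : ℝ} {f : ℝ → ℝ}
    (hf : ContinuousOn f (Set.Icc a b))
    (hmaps : Set.MapsTo f (Set.Icc a b) (Set.Icc a b))
    (hU : IsUniversalF1 a b f) :
    ∃ p ∈ Set.Icc a b, f p = p ∧
      ∃ u : ℕ → ℝ, (∀ n, u n ∈ Set.Icc a b) ∧
        Filter.Tendsto u Filter.atTop (nhds p) ∧
        (∀ n, Even n → p < u n) ∧
        (∀ n, Odd n → u n < p) ∧
        (∀ n, n % 4 = 0 ∨ n % 4 = 1 → p < f (u n)) ∧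
        (∀ n, n % 4 = 2 ∨ n % 4 = 3 → f (u n) < p) := by
  obtain ⟨q, hq, hpat⟩ := hU (-1) 1 (by norm_num) testMap testMap_cont.continuousOn
    (by
      intro x hx
      have h1 := testMap_abs x
      have h2 : |x| ≤ 1 := abs_le.mpr hx
      exact abs_le.mp (by linarith))
    (by
      rintro ⟨x, _, y, _, hxy, h1, h2⟩
      have e1 := testMap_abs x
      have e2 := testMap_abs y
      rw [h1] at e1
      rw [h2] at e2
      have hx0 : |x| = 0 := by linarith [abs_nonneg x, abs_nonneg y]
      have hy0 : |y| = 0 := by linarith [abs_nonneg x, abs_nonneg y]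
      exact hxy ((abs_eq_zero.mp hx0).trans (abs_eq_zero.mp hy0).symm))
    (-1) (by norm_num)
  let X : ℕ → ℝ := fun n => f^[n] q
  have hX : ∀ n, X n ∈ Set.Icc a b := fun n => iter_mem hmaps hq n
  have hXs : ∀ n, f (X n) = X (n+1) := fun n => (Function.iterate_succ_apply' f n q).symm
  have plt : ∀ {i j : ℕ}, i < j → ((1:ℝ)/2)^j < (1/2)^i := fun h =>
    pow_lt_pow_right_of_lt_one₀ (by norm_num) (by norm_num) h
  have ppos : ∀ i : ℕ, (0:ℝ) < (1/2)^i := fun i => by positivity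
  have o01 : ∀ k, X (4*k) < X (4*k+1) := fun k => by
    refine (hpat _ _).mp ?_
    rw [(test_orbit k).1, (test_orbit k).2.1]
    exact neg_lt_neg (plt (by omega))
  have o14 : ∀ k, X (4*k+1) < X (4*(k+1)) := fun k => by
    refine (hpat _ _).mp ?_
    rw [(test_orbit (k+1)).1, (test_orbit k).2.1]
    exact neg_lt_neg (plt (by omega))
  have o32 : ∀ k, X (4*k+3) < X (4*k+2) := fun k => by
    refine (hpat _ _).mp ?_
    rw [(test_orbit k).2.2.1, (test_orbit k).2.2.2]
    exact plt (by omega)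
  have o63 : ∀ k, X (4*(k+1)+2) < X (4*k+3) := fun k => by
    refine (hpat _ _).mp ?_
    rw [(test_orbit (k+1)).2.2.1, (test_orbit k).2.2.2]
    exact plt (by omega)
  have mono0 : StrictMono (fun k => X (4*k)) :=
    strictMono_nat_of_lt_succ fun k => (o01 k).trans (o14 k)
  have anti3 : StrictAnti (fun k => X (4*k+3)) :=
    strictAnti_nat_of_succ_lt fun k => (o32 (k+1)).trans (o63 k)
  obtain ⟨p, hp0⟩ : ∃ p, Filter.Tendsto (fun k => X (4*k)) Filter.atTop (nhds p) :=
    ⟨_, tendsto_atTop_ciSup mono0.monotone ⟨b, by rintro _ ⟨k, rfl⟩; exact (hX _).2⟩⟩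
  obtain ⟨r, hr3⟩ : ∃ r, Filter.Tendsto (fun k => X (4*k+3)) Filter.atTop (nhds r) :=
    ⟨_, tendsto_atTop_ciInf anti3.antitone ⟨a, by rintro _ ⟨k, rfl⟩; exact (hX _).1⟩⟩
  have hp0' : Filter.Tendsto (fun k => X (4*(k+1))) Filter.atTop (nhds p) :=
    hp0.comp (Filter.tendsto_add_atTop_nat 1)
  have hp1 : Filter.Tendsto (fun k => X (4*k+1)) Filter.atTop (nhds p) :=
    tendsto_of_tendsto_of_tendsto_of_le_of_le hp0 hp0' (fun k => (o01 k).le) (fun k => (o14 k).le)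
  have hpI : p ∈ Set.Icc a b := isClosed_Icc.mem_of_tendsto hp0 (Filter.Eventually.of_forall fun _ => hX _)
  have push : ∀ v : ℕ → ℝ, (∀ k, v k ∈ Set.Icc a b) → Filter.Tendsto v Filter.atTop (nhds p) →
      Filter.Tendsto (fun k => f (v k)) Filter.atTop (nhds (f p)) := fun v hv hl =>
    (hf p hpI).tendsto.comp
      (tendsto_nhdsWithin_iff.mpr ⟨hl, Filter.Eventually.of_forall hv⟩)
  have hfp : f p = p := by
    have := push _ (fun k => hX (4*k)) hp0
    simp only [hXs] at this
    exact tendsto_nhds_unique this hp1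
  have hp2 : Filter.Tendsto (fun k => X (4*k+2)) Filter.atTop (nhds p) := by
    have := push _ (fun k => hX (4*k+1)) hp1
    simp only [hXs, hfp] at this
    exact this
  have hp3 : Filter.Tendsto (fun k => X (4*k+3)) Filter.atTop (nhds p) := by
    have := push _ (fun k => hX (4*k+2)) hp2
    simp only [hXs, hfp] at this
    exact this
  have lt0 : ∀ k, X (4*k) < p := fun k =>
    (mono0 (Nat.lt_succ_self k)).trans_le (mono0.monotone.ge_of_tendsto hp0 (k+1))
  have lt1 : ∀ k, X (4*k+1) < p := fun k => (o14 k).trans (lt0 (k+1))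
  have gt3 : ∀ k, p < X (4*k+3) := fun k =>
    (anti3.antitone.le_of_tendsto hp3 (k+1)).trans_lt (anti3 (Nat.lt_succ_self k))
  have gt2 : ∀ k, p < X (4*k+2) := fun k => (gt3 k).trans (o32 k)
  -- the required sequence: n = 0,1,2,3 mod 4 use orbit indices 2,1,3,0 mod 4
  let σ : ℕ → ℕ := fun i => if i = 0 then 2 else if i = 1 then 1 else if i = 2 then 3 else 0
  have dec : ∀ n : ℕ, ∃ k, n = 4*k ∨ n = 4*k+1 ∨ n = 4*k+2 ∨ n = 4*k+3 := fun n =>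
    ⟨n/4, by omega⟩
  let u : ℕ → ℝ := fun n => X (4*(n/4) + σ (n%4))
  have u0 : ∀ k, u (4*k) = X (4*k+2) := fun k => by
    have h1 : (4*k)/4 = k := by omega
    have h2 : (4*k)%4 = 0 := by omega
    simp [u, h2, σ]
  have u1 : ∀ k, u (4*k+1) = X (4*k+1) := fun k => by
    have h1 : (4*k+1)/4 = k := by omega
    have h2 : (4*k+1)%4 = 1 := by omega
    simp only [u, h1, h2, σ]; simp
  have u2 : ∀ k, u (4*k+2) = X (4*k+3) := fun k => by
    have h1 : (4*k+2)/4 = k := by omega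
    have h2 : (4*k+2)%4 = 2 := by omega
    simp only [u, h1, h2, σ]; simp
  have u3 : ∀ k, u (4*k+3) = X (4*k) := fun k => by
    have h1 : (4*k+3)/4 = k := by omega
    have h2 : (4*k+3)%4 = 3 := by omega
    simp only [u, h1, h2, σ]; simp
  refine ⟨p, hpI, hfp, u, fun n => hX _, ?_, ?_, ?_, ?_, ?_⟩
  · rw [Metric.tendsto_atTop]
    intro ε hε
    obtain ⟨N0, hN0⟩ := Metric.tendsto_atTop.mp hp0 ε hε
    obtain ⟨N1, hN1⟩ := Metric.tendsto_atTop.mp hp1 ε hε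
    obtain ⟨N2, hN2⟩ := Metric.tendsto_atTop.mp hp2 ε hε
    obtain ⟨N3, hN3⟩ := Metric.tendsto_atTop.mp hp3 ε hε
    refine ⟨4*(N0+N1+N2+N3+1), fun n hn => ?_⟩
    obtain ⟨k, rfl | rfl | rfl | rfl⟩ := dec n
    · rw [u0]; exact hN2 k (by omega)
    · rw [u1]; exact hN1 k (by omega)
    · rw [u2]; exact hN3 k (by omega)
    · rw [u3]; exact hN0 k (by omega)
  · intro n hn
    rw [Nat.even_iff] at hn
    obtain ⟨k, rfl | rfl | rfl | rfl⟩ := dec n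
    · rw [u0]; exact gt2 k
    · omega
    · rw [u2]; exact gt3 k
    · omega
  · intro n hn
    rw [Nat.odd_iff] at hn
    obtain ⟨k, rfl | rfl | rfl | rfl⟩ := dec n
    · omega
    · rw [u1]; exact lt1 k
    · omega
    · rw [u3]; exact lt0 k
  · intro n hn
    obtain ⟨k, rfl | rfl | rfl | rfl⟩ := dec n
    · rw [u0, hXs]; exact gt3 k
    · rw [u1, hXs]; exact gt2 k
    · omega
    · omega
  · intro n hn
    obtain ⟨k, rfl | rfl | rfl | rfl⟩ := dec n
    · omega
    · omega
    · rw [u2, hXs]; exact lt0 (k+1)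
    · rw [u3, hXs]; exact lt1 k

/-- Characterization of universal maps in the first Sharkovsky class via a sequence
oscillating around a fixed point with prescribed signs of its images. -/
theorem stmt_15 (a b : ℝ) (hab : a ≤ b) (f : ℝ → ℝ)
    (hf : ContinuousOn f (Set.Icc a b))
    (hmaps : Set.MapsTo f (Set.Icc a b) (Set.Icc a b))
    (hno2 : ¬ ∃ x ∈ Set.Icc a b, ∃ y ∈ Set.Icc a b, x ≠ y ∧ f x = y ∧ f y = x) :
    IsUniversalF1 a b f ↔
    ∃ p ∈ Set.Icc a b, f p = p ∧
      ∃ u : ℕ → ℝ, (∀ n, u n ∈ Set.Icc a b) ∧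
        Filter.Tendsto u Filter.atTop (nhds p) ∧
        (∀ n, Even n → p < u n) ∧
        (∀ n, Odd n → u n < p) ∧
        (∀ n, n % 4 = 0 ∨ n % 4 = 1 → p < f (u n)) ∧
        (∀ n, n % 4 = 2 ∨ n % 4 = 3 → f (u n) < p) := by
  constructor
  · exact forward hf hmaps
  · rintro ⟨p, hp, hfp, u, hu, hlim, he, ho, h01, h23⟩
    exact backward hf hmaps hno2 hp hfp hu hlim he ho h01 h23
end
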